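/- arXiv:1705.08379 — 5 statements merged into one kernel-verified Lean document; each statement's English description precedes it below -/
import Mathlib

section
/- Let r ≥ 1, let G be an r-regular finite simple graph on n vertices, k ≥ 0 an integer, and S(G) the 3k-subdivision of G. The following are equivalent: (i) S(G) admits a perfect edge dominating set of size exactly (nr/(2(2r-1)))·(2rk - k + 1); (ii) the vertices of G can be colored with two colors W and Y so that no two W-vertices are adjacent and every Y-vertex has exactly one Y-neighbor; (iii) G admits an efficient edge dominating set. -/
/-- An edge `e` dominates an edge `f` if they share an endpoint (in particular,
every edge dominates itself). -/
def edgeDom {V : Type*} (e f : Sym2 V) : Prop := ∃ v, v ∈ e ∧ v ∈ f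

/-- `P` is a perfect edge dominating set of `G`. -/
def IsPEDS {V : Type*} (G : SimpleGraph V) (P : Set (Sym2 V)) : Prop :=
  P ⊆ G.edgeSet ∧ ∀ f ∈ G.edgeSet, f ∉ P → ∃! e, e ∈ P ∧ edgeDom e f

/-- `H` is the `3k`-subdivision of `G`, witnessed by the map `ι : V → W`
(the images of the original vertices, "extremes") and, for every ordered pair
`(v, w)` of adjacent vertices, the path `p v w 0, p v w 1, …, p v w (3k+1)`
replacing the edge `vw` (so `p v w 0 = ι v`, `p v w (3k+1) = ι w`, the `3k`
internal vertices are new, pairwise distinct, distinct for distinct edges of `G`,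
and the edges of `H` are exactly the consecutive pairs of these paths).
For `k = 0` the subdivision is `G` itself. -/
def IsSubdivision {V W : Type*} (G : SimpleGraph V) (k : ℕ) (H : SimpleGraph W)
    (ι : V → W) (p : V → V → ℕ → W) : Prop :=
  Function.Injective ι ∧
  (∀ v w, G.Adj v w → p v w 0 = ι v ∧ p v w (3 * k + 1) = ι w) ∧
  (∀ v w, G.Adj v w → ∀ i ≤ 3 * k + 1, p v w i = p w v (3 * k + 1 - i)) ∧
  (∀ v w, G.Adj v w → ∀ i ≤ 3 * k + 1, ∀ j ≤ 3 * k + 1, p v w i = p v w j → i = j) ∧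
  (∀ v w, G.Adj v w → ∀ i, 0 < i → i < 3 * k + 1 → p v w i ∉ Set.range ι) ∧
  (∀ v w v' w', G.Adj v w → G.Adj v' w' → ∀ i j, 0 < i → i < 3 * k + 1 →
      0 < j → j < 3 * k + 1 → p v w i = p v' w' j → s(v, w) = s(v', w')) ∧
  (∀ x : W, (∃ v, x = ι v) ∨
      ∃ v w i, G.Adj v w ∧ 0 < i ∧ i < 3 * k + 1 ∧ x = p v w i) ∧
  (∀ x y : W, H.Adj x y ↔ ∃ v w i, G.Adj v w ∧ i ≤ 3 * k ∧
      ((x = p v w i ∧ y = p v w (i + 1)) ∨ (y = p v w i ∧ x = p v w (i + 1))))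

/-- The edge set `S(e)` of the path of the subdivision replacing the edge
`e = vw` of `G`: the edges `e_0, e_1, …, e_{3k}`. -/
def pathEdges {V W : Type*} (p : V → V → ℕ → W) (k : ℕ) (v w : V) :
    Set (Sym2 W) :=
  {e | ∃ i ≤ 3 * k, e = s(p v w i, p v w (i + 1))}

/-- `D` is an efficient edge dominating set of `G`. -/
def IsEEDS {V : Type*} (G : SimpleGraph V) (D : Set (Sym2 V)) : Prop :=
  D ⊆ G.edgeSet ∧ ∀ f ∈ G.edgeSet, ∃! e, e ∈ D ∧ edgeDom e f

/-- `G` is `r`-regular: every vertex has exactly `r` neighbors. -/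
def IsRegular' {V : Type*} (G : SimpleGraph V) (r : ℕ) : Prop :=
  ∀ v : V, (G.neighborSet v).ncard = r

/-!
Let `P` be a perfect edge dominating set of `S(G)`. Three consecutive edges of a path `S(e)` always
include one of `P`, so `|P ∩ S(e)| ≥ k`. When equality holds, following the path shows that `P`
covers exactly one end of `e`; when `P` contains an end edge of `S(e)`, the inequality is strict.
Let `F` consist of the edges `e` of `G` with `|P ∩ S(e)| > k`, and let `Y` be the set of vertices
of `G` covered by `P`. Then every vertex of `Y` has an `F`-neighbour, and `G \ F` is bipartite
between `Y` and its complement. Counting the edges of `G \ F` from both sides gives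
`n r + ∑_{v ∈ Y} deg_F v = 2 r |Y| + ∑_{v ∉ Y} deg_F v`. As `|Y| ≤ ∑_{v ∈ Y} deg_F v`, this implies
`(2 r - 1) ∑ deg_F v ≥ n r`, and `|P| ≥ k |E(G)| + |E(F)|` turns it into the bound of (i). If the
bound is attained and `r ≥ 2`, then `F` is a perfect matching on `Y`, which is (ii); if `r = 1`, all
vertices can be yellow.

Conversely, a colouring as in (ii) extends with period three along every path `S(e)` to such a
colouring of `S(G)`. The edges joining its yellow vertices form an efficient edge dominating set,
with `k + 1` edges on `S(e)` if both ends of `e` are yellow and `k` edges otherwise.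
-/

section EdgeDomination

variable {V : Type*} {G : SimpleGraph V} {P : Set (Sym2 V)} {Y : Set V} {x y : V}

/-- The vertices covered by a set of edges. When the edges form an efficient edge dominating set,
these are the yellow vertices of the corresponding colouring. -/
def coveredVertices (P : Set (Sym2 V)) : Set V := {x | ∃ y, s(x, y) ∈ P}

/-- The colouring of condition (ii), encoded by its set `Y` of yellow vertices: the white vertices
are independent and the yellow ones induce a perfect matching. -/
def IsEfficientColoring (G : SimpleGraph V) (Y : Set V) : Prop :=
  (∀ u v : V, u ∉ Y → v ∉ Y → ¬ G.Adj u v) ∧ ∀ u ∈ Y, ∃! v, v ∈ Y ∧ G.Adj u v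

theorem IsEEDS.isPEDS (hP : IsEEDS G P) : IsPEDS G P :=
  ⟨hP.1, fun f hf _ => hP.2 f hf⟩

theorem IsPEDS.mem_coveredVertices_iff_notMem (hP : IsPEDS G P) (hxy : G.Adj x y)
    (hn : s(x, y) ∉ P) : x ∈ coveredVertices P ↔ y ∉ coveredVertices P := by
  have hdom := hP.2 s(x, y) hxy hn
  constructor
  · rintro ⟨a, ha⟩ ⟨b, hb⟩
    have hab : s(x, a) = s(y, b) :=
      hdom.unique ⟨ha, x, by simp, by simp⟩ ⟨hb, y, by simp, by simp⟩
    rcases Sym2.eq_iff.1 hab with ⟨rfl, -⟩ | ⟨-, rfl⟩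
    · exact hxy.ne rfl
    · exact hn ha
  · intro hy
    obtain ⟨e, ⟨he, z, hze, hz⟩, -⟩ := hdom
    obtain ⟨a, rfl⟩ := Sym2.mem_iff_exists.1 hze
    rcases Sym2.mem_iff.1 hz with rfl | rfl
    · exact ⟨a, he⟩
    · exact absurd ⟨a, he⟩ hy

theorem IsEEDS.isEfficientColoring_coveredVertices (hP : IsEEDS G P) :
    IsEfficientColoring G (coveredVertices P) := by
  refine ⟨fun u v hu hv huv => ?_, ?_⟩
  · have huv_notMem : s(u, v) ∉ P := fun h => hu ⟨v, h⟩
    exact hu ((hP.isPEDS.mem_coveredVertices_iff_notMem huv huv_notMem).2 hv)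
  · rintro u ⟨v, huv⟩
    refine ⟨v, ⟨⟨u, by rwa [Sym2.eq_swap]⟩, hP.1 huv⟩, ?_⟩
    rintro w ⟨⟨z, hwz⟩, huw⟩
    have heq : s(w, z) = s(u, v) :=
      (hP.2 s(u, w) huw).unique ⟨hwz, w, by simp, by simp⟩ ⟨huv, u, by simp, by simp⟩
    have hw : w ∈ s(u, v) := heq ▸ Sym2.mem_mk_left w z
    exact (Sym2.mem_iff.1 hw).resolve_left huw.ne'

theorem spanningCoe_induce_adj :
    (G.induce Y).spanningCoe.Adj x y ↔ G.Adj x y ∧ x ∈ Y ∧ y ∈ Y := by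
  simp

theorem spanningCoe_induce_le : (G.induce Y).spanningCoe ≤ G :=
  fun _ _ h => (spanningCoe_induce_adj.1 h).1

theorem IsEfficientColoring.existsUnique_edgeDom (hY : IsEfficientColoring G Y)
    (hxy : G.Adj x y) (hx : x ∈ Y) :
    ∃! e, e ∈ (G.induce Y).spanningCoe.edgeSet ∧ edgeDom e s(x, y) := by
  obtain ⟨z, ⟨hz, hxz⟩, hz_unique⟩ := hY.2 x hx
  refine ⟨s(x, z), ⟨spanningCoe_induce_adj.2 ⟨hxz, hx, hz⟩, x, by simp, by simp⟩, ?_⟩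
  rintro e ⟨he, t, hte, ht⟩
  obtain ⟨a, rfl⟩ := Sym2.mem_iff_exists.1 hte
  obtain ⟨hta, ht_mem, ha⟩ := spanningCoe_induce_adj.1 he
  rcases Sym2.mem_iff.1 ht with rfl | rfl
  · rw [hz_unique a ⟨ha, hta⟩]
  · have hax : a = x := (hY.2 t ht_mem).unique ⟨ha, hta⟩ ⟨hx, hxy.symm⟩
    rw [hax, ← hz_unique t ⟨ht_mem, hxy⟩, Sym2.eq_swap]

theorem IsEfficientColoring.isEEDS (hY : IsEfficientColoring G Y) :
    IsEEDS G (G.induce Y).spanningCoe.edgeSet := by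
  refine ⟨SimpleGraph.edgeSet_mono spanningCoe_induce_le, fun f hf => ?_⟩
  induction f with | _ x y
  by_cases hx : x ∈ Y
  · exact hY.existsUnique_edgeDom hf hx
  · have hy : y ∈ Y := by_contra fun hy => hY.1 x y hx hy hf
    rw [Sym2.eq_swap]
    exact hY.existsUnique_edgeDom hf.symm hy

theorem exists_isEfficientColoring_iff_exists_isEEDS :
    (∃ Y, IsEfficientColoring G Y) ↔ ∃ D, IsEEDS G D :=
  ⟨fun ⟨_, hY⟩ => ⟨_, hY.isEEDS⟩, fun ⟨_, hD⟩ => ⟨_, hD.isEfficientColoring_coveredVertices⟩⟩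

end EdgeDomination

section DegreeCount

open Finset

variable {V : Type*} {G F : SimpleGraph V} {Y : Set V} {r : ℕ}

theorem IsRegular'.isRegularOfDegree [G.LocallyFinite] (hG : IsRegular' G r) :
    G.IsRegularOfDegree r := fun v => by
  rw [← hG v, ← G.coe_neighborFinset, Set.ncard_coe_finset, G.card_neighborFinset_eq_degree]

theorem IsEfficientColoring.univ_of_isRegular'_one (hG : IsRegular' G 1) :
    IsEfficientColoring G Set.univ := by
  refine ⟨fun u _ hu => absurd (Set.mem_univ u) hu, fun u _ => ?_⟩
  obtain ⟨v, hv⟩ := Set.ncard_eq_one.1 (hG u)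
  have hadj (w : V) : G.Adj u w ↔ w = v := by simpa using Set.ext_iff.1 hv w
  exact ⟨v, ⟨trivial, (hadj v).2 rfl⟩, fun w hw => (hadj w).1 hw.2⟩

theorem IsEfficientColoring.isBipartiteWith_sdiff (hY : IsEfficientColoring G Y) :
    (G \ (G.induce Y).spanningCoe).IsBipartiteWith Y Yᶜ where
  disjoint := disjoint_compl_right
  mem_of_adj u v := by
    rw [SimpleGraph.sdiff_adj, spanningCoe_induce_adj]
    rintro ⟨huv, hnot⟩
    have hwhite := hY.1 u v
    simp only [Set.mem_compl_iff]
    tauto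

theorem IsEfficientColoring.of_isBipartiteWith_sdiff [F.LocallyFinite] (hFG : F ≤ G)
    (hY : (G \ F).IsBipartiteWith Y Yᶜ) (hone : ∀ v ∈ Y, F.degree v = 1)
    (hzero : ∀ v ∉ Y, F.degree v = 0) : IsEfficientColoring G Y := by
  have hF_mem {u v : V} (huv : F.Adj u v) : u ∈ Y := by
    by_contra hu
    exact (F.degree_pos_iff_exists_adj u).2 ⟨v, huv⟩ |>.ne' (hzero u hu)
  have hG_mem {u v : V} (huv : G.Adj u v) (hF : ¬ F.Adj u v) : u ∈ Y ∧ v ∉ Y ∨ u ∉ Y ∧ v ∈ Y :=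
    hY.mem_of_adj ⟨huv, hF⟩
  refine ⟨fun u v hu hv huv => ?_, fun u hu => ?_⟩
  · have := hG_mem huv fun hF => hu (hF_mem hF)
    tauto
  · obtain ⟨v, huv, hv⟩ := SimpleGraph.degree_eq_one_iff_existsUnique_adj.1 (hone u hu)
    refine ⟨v, ⟨hF_mem huv.symm, hFG huv⟩, fun w ⟨hw, huw⟩ => hv w ?_⟩
    by_contra hF
    exact (hG_mem huw hF).elim (fun h => h.2 hw) (fun h => h.1 hu)

theorem IsEfficientColoring.degree_eq_one [(G.induce Y).spanningCoe.LocallyFinite]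
    (hY : IsEfficientColoring G Y) {v : V} (hv : v ∈ Y) :
    (G.induce Y).spanningCoe.degree v = 1 := by
  rw [SimpleGraph.degree_eq_one_iff_existsUnique_adj]
  obtain ⟨w, ⟨hw, hvw⟩, hw_unique⟩ := hY.2 v hv
  refine ⟨w, spanningCoe_induce_adj.2 ⟨hvw, hv, hw⟩, fun u hu => ?_⟩
  obtain ⟨hvu, -, hu⟩ := spanningCoe_induce_adj.1 hu
  exact hw_unique u ⟨hu, hvu⟩

theorem degree_spanningCoe_induce_of_notMem [(G.induce Y).spanningCoe.LocallyFinite] {v : V}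
    (hv : v ∉ Y) : (G.induce Y).spanningCoe.degree v = 0 := by
  by_contra hne
  obtain ⟨w, hvw⟩ := (SimpleGraph.degree_pos_iff_exists_adj _ v).1 (Nat.pos_of_ne_zero hne)
  exact hv (spanningCoe_induce_adj.1 hvw).2.1

variable [Fintype V] [DecidableRel G.Adj] [DecidableRel F.Adj]

theorem degree_sdiff_add_degree [DecidableRel (G \ F).Adj] (hFG : F ≤ G) (v : V) :
    (G \ F).degree v + F.degree v = G.degree v := by
  classical
  have hsub : F.neighborFinset v ⊆ G.neighborFinset v := fun w => by simpa using @hFG v w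
  simp only [← SimpleGraph.card_neighborFinset_eq_degree, SimpleGraph.neighborFinset_sdiff]
  exact card_sdiff_add_card_eq_card hsub

variable {s : Finset V}

theorem card_mul_add_sum_degree [DecidableEq V] (hG : G.IsRegularOfDegree r) (hFG : F ≤ G)
    (hs : (G \ F).IsBipartiteWith s sᶜ) :
    Fintype.card V * r + ∑ v ∈ s, F.degree v = 2 * r * #s + ∑ v ∈ sᶜ, F.degree v := by
  have hbalance : ∑ v ∈ s, (G \ F).degree v = ∑ v ∈ sᶜ, (G \ F).degree v :=
    SimpleGraph.isBipartiteWith_sum_degrees_eq (by rwa [coe_compl])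
  have hsum (t : Finset V) : ∑ v ∈ t, (G \ F).degree v + ∑ v ∈ t, F.degree v = #t * r := by
    rw [← sum_add_distrib, sum_congr rfl fun v _ => degree_sdiff_add_degree hFG v]
    simp [hG.degree_eq]
  have hin := hsum s
  have hout := hsum sᶜ
  have hcard : #s * r + #sᶜ * r = Fintype.card V * r := by rw [← add_mul, card_add_card_compl]
  linarith

theorem two_mul_sub_one_mul_sum_degree (hG : G.IsRegularOfDegree r) (hFG : F ≤ G)
    (hs : (G \ F).IsBipartiteWith s sᶜ) (hone : ∀ v ∈ s, F.degree v = 1)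
    (hzero : ∀ v ∉ s, F.degree v = 0) :
    (2 * r - 1 : ℤ) * ∑ v, F.degree v = Fintype.card V * r := by
  classical
  have hid := card_mul_add_sum_degree hG hFG hs
  rw [← sum_add_sum_compl s]
  rw [sum_congr rfl hone, sum_congr rfl fun v hv => hzero v (mem_compl.1 hv)] at hid ⊢
  simp only [sum_const, smul_eq_mul, mul_one, mul_zero, add_zero] at hid ⊢
  zify at hid
  linarith

theorem degree_eq_of_two_mul_sub_one_mul_sum_degree_le (hG : G.IsRegularOfDegree r) (hr : 2 ≤ r)
    (hFG : F ≤ G) (hs : (G \ F).IsBipartiteWith s sᶜ) (hpos : ∀ v ∈ s, 1 ≤ F.degree v)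
    (hle : (2 * r - 1 : ℤ) * ∑ v, F.degree v ≤ Fintype.card V * r) :
    (∀ v ∈ s, F.degree v = 1) ∧ ∀ v ∉ s, F.degree v = 0 := by
  classical
  have hid := card_mul_add_sum_degree hG hFG hs
  have hin : #s ≤ ∑ v ∈ s, F.degree v := by simpa using card_nsmul_le_sum s _ 1 hpos
  rw [← sum_add_sum_compl s] at hle
  generalize ha : ∑ v ∈ s, F.degree v = a at *
  generalize hb : ∑ v ∈ sᶜ, F.degree v = b at *
  have hslack : 2 * r * (a - #s) + (2 * r - 2) * b ≤ (0 : ℤ) := by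
    zify at hid
    push_cast at hle
    linarith
  zify at hr hin
  have hb_zero : b = 0 := by nlinarith
  have ha_eq : #s = a := by
    zify
    nlinarith
  rw [hb_zero, sum_eq_zero_iff] at hb
  refine ⟨fun v hv => Eq.symm ?_, fun v hv => hb v (mem_compl.2 hv)⟩
  refine (sum_eq_sum_iff_of_le hpos).1 ?_ v hv
  rw [ha, ← ha_eq, card_eq_sum_ones]

theorem two_mul_sum_edgeFinset_add_ite (hG : G.IsRegularOfDegree r) (hFG : F ≤ G) (k : ℕ) :
    2 * ∑ e ∈ G.edgeFinset, (k + if e ∈ F.edgeSet then 1 else 0) =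
      Fintype.card V * r * k + ∑ v, F.degree v := by
  classical
  have hfilter : {e ∈ G.edgeFinset | e ∈ F.edgeSet} = F.edgeFinset := by
    ext e
    simpa using @SimpleGraph.edgeSet_mono _ _ _ hFG e
  have hedges := G.sum_degrees_eq_twice_card_edges
  rw [sum_add_distrib, sum_boole, hfilter, F.sum_degrees_eq_twice_card_edges]
  simp only [hG.degree_eq, sum_const, card_univ, smul_eq_mul, Nat.cast_id] at hedges ⊢
  rw [hedges]
  ring

end DegreeCount

section PathTrace

variable {A C : ℕ → Prop} {k m : ℕ}

/-- The trace left by a perfect edge dominating set on a path with edges `e_0, …, e_m`: `A i` says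
that `e_i` is chosen, and `C i` that the vertex shared by `e_{i-1}` and `e_i` is covered. Nothing
is asked at the two ends of the path, which may be covered from outside. -/
structure IsPerfectTrace (m : ℕ) (A C : ℕ → Prop) : Prop where
  covered_iff_not : ∀ i ≤ m, ¬ A i → (C i ↔ ¬ C (i + 1))
  covered_iff_or : ∀ i < m, (C (i + 1) ↔ A i ∨ A (i + 1))

theorem IsPerfectTrace.mono {n : ℕ} (h : IsPerfectTrace m A C) (hnm : n ≤ m) :
    IsPerfectTrace n A C :=
  ⟨fun i hi => h.covered_iff_not i (hi.trans hnm), fun i hi => h.covered_iff_or i (by omega)⟩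

theorem IsPerfectTrace.or_or_of_add_two_le (h : IsPerfectTrace m A C) {i : ℕ} (hi : i + 2 ≤ m) :
    A i ∨ A (i + 1) ∨ A (i + 2) := by
  have hmid := h.covered_iff_not (i + 1) (by omega)
  have hleft := h.covered_iff_or i (by omega)
  have hright := h.covered_iff_or (i + 1) (by omega)
  tauto

variable [DecidablePred A]

theorem le_count_of_forall_block (h : ∀ i < k, A (3 * i) ∨ A (3 * i + 1) ∨ A (3 * i + 2)) :
    k ≤ Nat.count A (3 * k) := by
  induction k with
  | zero => simp
  | succ k ih =>
    have hprev := ih fun i hi => h i (by omega)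
    have hlast := h k (by omega)
    simp only [mul_add, Nat.count_succ]
    grind

theorem IsPerfectTrace.le_count (h : IsPerfectTrace (3 * k) A C) :
    k ≤ Nat.count A (3 * k + 1) :=
  (le_count_of_forall_block fun i _ => h.or_or_of_add_two_le (by omega)).trans
    (Nat.count_monotone A (Nat.le_succ _))

theorem IsPerfectTrace.lt_count (h : IsPerfectTrace (3 * k) A C) (h0 : A 0) :
    k < Nat.count A (3 * k + 1) := by
  rw [Nat.count_succ', if_pos h0, Nat.lt_succ_iff]
  exact le_count_of_forall_block fun i _ => h.or_or_of_add_two_le (i := 3 * i + 1) (by omega)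

theorem IsPerfectTrace.of_count_eq (h : IsPerfectTrace (3 * k) A C)
    (hcount : Nat.count A (3 * k + 1) = k) : ¬ A (3 * k) ∧ (C 0 ↔ ¬ C (3 * k + 1)) := by
  induction k with
  | zero =>
    have h0 : ¬ A 0 := by simpa [Nat.count_succ] using hcount
    exact ⟨h0, h.covered_iff_not 0 le_rfl h0⟩
  | succ k ih =>
    have hprefix : IsPerfectTrace (3 * k) A C := h.mono (by omega)
    have hle := hprefix.le_count
    have hwindow := h.or_or_of_add_two_le (i := 3 * k + 1) (by omega)
    have hstep : Nat.count A (3 * (k + 1) + 1) = Nat.count A (3 * k + 1)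
      + (if A (3 * k + 1) then 1 else 0) + (if A (3 * k + 2) then 1 else 0)
      + (if A (3 * k + 3) then 1 else 0) := by
      simp only [mul_add, mul_one, Nat.count_succ]
    have hprefix_count : Nat.count A (3 * k + 1) = k := by grind
    obtain ⟨hlast, hends⟩ := ih hprefix hprefix_count
    have hsingle : ¬ (A (3 * k + 1) ∧ A (3 * k + 2)) ∧ ¬ (A (3 * k + 1) ∧ A (3 * k + 3)) ∧
        ¬ (A (3 * k + 2) ∧ A (3 * k + 3)) := by grind
    have hnot_first := h.covered_iff_not (3 * k + 1) (by omega)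
    have hnot_third := h.covered_iff_not (3 * k + 3) (by omega)
    have hleft : C (3 * k + 1) ↔ A (3 * k + 1) := by
      simpa [hlast] using h.covered_iff_or (3 * k) (by omega)
    have hmid := h.covered_iff_or (3 * k + 1) (by omega)
    have hright := h.covered_iff_or (3 * k + 2) (by omega)
    have hlast_next : ¬ A (3 * k + 3) := by grind
    have hperiod : C (3 * k + 4) ↔ C (3 * k + 1) := by grind
    exact ⟨hlast_next, hends.trans (not_congr hperiod.symm)⟩

end PathTrace

section Subdivision

variable {V W : Type*} {G : SimpleGraph V} {k : ℕ} {H : SimpleGraph W} {ι : V → W}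
  {p : V → V → ℕ → W}

/-- The edge `e_i` of the path replacing `vw`. -/
def pathEdge (p : V → V → ℕ → W) (v w : V) (i : ℕ) : Sym2 W := s(p v w i, p v w (i + 1))

/-- The edge set `S(e)` as a function of the unordered edge `e`: over an edge `e = vw` of `G`,
`pathEdges p k v w` and `pathEdges p k w v` are the same set. -/
def edgePath (p : V → V → ℕ → W) (k : ℕ) (e : Sym2 V) : Set (Sym2 W) :=
  {f | ∃ v w, s(v, w) = e ∧ f ∈ pathEdges p k v w}

namespace IsSubdivision

variable {u v w v' w' : V} {x y : W} {i j : ℕ} {P : Set (Sym2 W)}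

theorem path_zero (hs : IsSubdivision G k H ι p) (hvw : G.Adj v w) : p v w 0 = ι v :=
  (hs.2.1 v w hvw).1

theorem path_last (hs : IsSubdivision G k H ι p) (hvw : G.Adj v w) :
    p v w (3 * k + 1) = ι w :=
  (hs.2.1 v w hvw).2

theorem path_reverse (hs : IsSubdivision G k H ι p) (hvw : G.Adj v w)
    (hij : i + j = 3 * k + 1) : p v w i = p w v j := by
  rw [hs.2.2.1 v w hvw i (by omega), ← hij, Nat.add_sub_cancel_left]

theorem path_injOn (hs : IsSubdivision G k H ι p) (hvw : G.Adj v w) :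
    Set.InjOn (p v w) (Set.Iic (3 * k + 1)) :=
  fun i hi j hj => hs.2.2.2.1 v w hvw i hi j hj

theorem eq_ι_or_eq_path (hs : IsSubdivision G k H ι p) (x : W) :
    (∃ v, x = ι v) ∨ ∃ v w i, G.Adj v w ∧ i < 3 * k ∧ x = p v w (i + 1) := by
  rcases hs.2.2.2.2.2.2.1 x with hx | ⟨v, w, i, hvw, hi0, hi, rfl⟩
  · exact .inl hx
  · exact .inr ⟨v, w, i - 1, hvw, by omega, by rw [Nat.sub_add_cancel hi0]⟩

theorem adj_iff (hs : IsSubdivision G k H ι p) :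
    H.Adj x y ↔ ∃ v w i, G.Adj v w ∧ i ≤ 3 * k ∧ x = p v w i ∧ y = p v w (i + 1) := by
  rw [hs.2.2.2.2.2.2.2]
  constructor
  · rintro ⟨v, w, i, hvw, hi, ⟨rfl, rfl⟩ | ⟨rfl, rfl⟩⟩
    · exact ⟨v, w, i, hvw, hi, rfl, rfl⟩
    · exact ⟨w, v, 3 * k - i, hvw.symm, by omega, hs.path_reverse hvw (by omega),
        hs.path_reverse hvw (by omega)⟩
  · rintro ⟨v, w, i, hvw, hi, hx, hy⟩
    exact ⟨v, w, i, hvw, hi, .inl ⟨hx, hy⟩⟩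

theorem adj_path_succ (hs : IsSubdivision G k H ι p) (hvw : G.Adj v w) (hi : i ≤ 3 * k) :
    H.Adj (p v w i) (p v w (i + 1)) :=
  hs.adj_iff.2 ⟨v, w, i, hvw, hi, rfl, rfl⟩

theorem path_eq_ι (hs : IsSubdivision G k H ι p) (hvw : G.Adj v w) (hi : i ≤ 3 * k + 1)
    (h : p v w i = ι u) : i = 0 ∧ v = u ∨ i = 3 * k + 1 ∧ w = u := by
  rcases Nat.eq_zero_or_pos i with rfl | hi0
  · exact .inl ⟨rfl, hs.1 (by rw [← h, hs.path_zero hvw])⟩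
  rcases hi.eq_or_lt with rfl | hi
  · exact .inr ⟨rfl, hs.1 (by rw [← h, hs.path_last hvw])⟩
  · exact absurd ⟨u, h.symm⟩ (hs.2.2.2.2.1 v w hvw i hi0 hi)

theorem path_eq_path (hs : IsSubdivision G k H ι p) (hvw : G.Adj v w) (hvw' : G.Adj v' w')
    (hi0 : 0 < i) (hi : i < 3 * k + 1) (hj : j ≤ 3 * k + 1) (h : p v w i = p v' w' j) :
    v = v' ∧ w = w' ∧ i = j ∨ v = w' ∧ w = v' ∧ i + j = 3 * k + 1 := by
  have hnew : p v w i ∉ Set.range ι := hs.2.2.2.2.1 v w hvw i hi0 hi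
  have hj0 : j ≠ 0 := by
    rintro rfl
    exact hnew ⟨v', by rw [h, hs.path_zero hvw']⟩
  have hj_last : j ≠ 3 * k + 1 := by
    rintro rfl
    exact hnew ⟨w', by rw [h, hs.path_last hvw']⟩
  have hedge := hs.2.2.2.2.2.1 v w v' w' hvw hvw' i j hi0 hi (by omega) (by omega) h
  rcases Sym2.eq_iff.1 hedge with ⟨rfl, rfl⟩ | ⟨rfl, rfl⟩
  · exact .inl ⟨rfl, rfl, hs.path_injOn hvw hi.le hj h⟩
  · rw [hs.path_reverse hvw' (Nat.add_sub_of_le hj)] at h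
    have := hs.path_injOn hvw hi.le (Nat.sub_le _ _) h
    exact .inr ⟨rfl, rfl, by omega⟩

theorem adj_path_succ_iff (hs : IsSubdivision G k H ι p) (hvw : G.Adj v w) (hi : i < 3 * k) :
    H.Adj (p v w (i + 1)) y ↔ y = p v w i ∨ y = p v w (i + 2) := by
  constructor
  · intro h
    obtain ⟨v', w', j, hvw', hj, hx, rfl⟩ := hs.adj_iff.1 h
    rcases hs.path_eq_path hvw hvw' (by omega) (by omega) (by omega) hx with
      ⟨rfl, rfl, rfl⟩ | ⟨rfl, rfl, hij⟩
    · exact .inr rfl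
    · exact .inl (hs.path_reverse hvw' (by omega))
  · rintro (rfl | rfl)
    · exact (hs.adj_path_succ hvw hi.le).symm
    · exact hs.adj_path_succ hvw hi

theorem adj_ι_iff (hs : IsSubdivision G k H ι p) :
    H.Adj (ι v) y ↔ ∃ w, G.Adj v w ∧ y = p v w 1 := by
  constructor
  · intro h
    obtain ⟨v', w, i, hvw, hi, hx, rfl⟩ := hs.adj_iff.1 h
    obtain ⟨rfl, rfl⟩ : i = 0 ∧ v' = v := by
      have := hs.path_eq_ι hvw (by omega) hx.symm
      grind
    exact ⟨w, hvw, rfl⟩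
  · rintro ⟨w, hvw, rfl⟩
    rw [← hs.path_zero hvw]
    exact hs.adj_path_succ hvw (Nat.zero_le _)

theorem pathEdge_mem_edgeSet (hs : IsSubdivision G k H ι p) (hvw : G.Adj v w)
    (hi : i ≤ 3 * k) : pathEdge p v w i ∈ H.edgeSet :=
  hs.adj_path_succ hvw hi

theorem pathEdge_reverse (hs : IsSubdivision G k H ι p) (hvw : G.Adj v w)
    (hij : i + j = 3 * k) : pathEdge p v w i = pathEdge p w v j := by
  rw [pathEdge, pathEdge, hs.path_reverse hvw (j := j + 1) (by omega),
    hs.path_reverse hvw (j := j) (by omega), Sym2.eq_swap]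

theorem pathEdge_injOn (hs : IsSubdivision G k H ι p) (hvw : G.Adj v w) :
    Set.InjOn (pathEdge p v w) (Set.Iic (3 * k)) := by
  intro i (hi : i ≤ 3 * k) j (hj : j ≤ 3 * k) h
  have hinj {a b : ℕ} (ha : a ≤ 3 * k + 1) (hb : b ≤ 3 * k + 1) (hab : p v w a = p v w b) :
      a = b :=
    hs.path_injOn hvw ha hb hab
  rcases Sym2.eq_iff.1 h with ⟨h, -⟩ | ⟨hl, hr⟩
  · exact hinj (by omega) (by omega) h
  · have := hinj (by omega) (by omega) hl
    have := hinj (by omega) (by omega) hr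
    omega

theorem mk_eq_mk_of_pathEdge_eq (hs : IsSubdivision G k H ι p) (hvw : G.Adj v w)
    (hvw' : G.Adj v' w') (hi : i ≤ 3 * k) (hj : j ≤ 3 * k)
    (h : pathEdge p v w i = pathEdge p v' w' j) : s(v, w) = s(v', w') := by
  rcases Nat.eq_zero_or_pos k with rfl | hk
  · obtain rfl : i = 0 := by omega
    obtain rfl : j = 0 := by omega
    refine Sym2.map.injective hs.1 ?_
    simpa [pathEdge, hs.path_zero, hs.path_last, hvw, hvw'] using h
  obtain ⟨a, ha0, ha, ha_mem⟩ :
      ∃ a, 0 < a ∧ a < 3 * k + 1 ∧ p v w a ∈ pathEdge p v w i := by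
    rcases Nat.eq_zero_or_pos i with rfl | hi0
    · exact ⟨1, one_pos, by omega, Sym2.mem_mk_right _ _⟩
    · exact ⟨i, hi0, by omega, Sym2.mem_mk_left _ _⟩
  obtain ⟨b, hb, hab⟩ : ∃ b ≤ 3 * k + 1, p v w a = p v' w' b := by
    rw [h] at ha_mem
    rcases Sym2.mem_iff.1 ha_mem with hab | hab
    · exact ⟨j, by omega, hab⟩
    · exact ⟨j + 1, by omega, hab⟩
  rcases hs.path_eq_path hvw hvw' ha0 ha hb hab with ⟨rfl, rfl, -⟩ | ⟨rfl, rfl, -⟩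
  · rfl
  · exact Sym2.eq_swap

theorem edgePath_mk (hs : IsSubdivision G k H ι p) (hvw : G.Adj v w) :
    edgePath p k s(v, w) = pathEdges p k v w := by
  ext f
  refine ⟨?_, fun hf => ⟨v, w, rfl, hf⟩⟩
  rintro ⟨v', w', hvw', i, hi, rfl⟩
  rcases Sym2.eq_iff.1 hvw' with ⟨rfl, rfl⟩ | ⟨rfl, rfl⟩
  · exact ⟨i, hi, rfl⟩
  · exact ⟨3 * k - i, by omega, hs.pathEdge_reverse hvw.symm (by omega)⟩

theorem iUnion_edgePath (hs : IsSubdivision G k H ι p) :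
    ⋃ e ∈ G.edgeSet, edgePath p k e = H.edgeSet := by
  ext f
  simp only [Set.mem_iUnion]
  constructor
  · rintro ⟨_, he, v, w, rfl, i, hi, rfl⟩
    exact hs.pathEdge_mem_edgeSet he hi
  · induction f with | _ x y
    intro hf
    obtain ⟨v, w, i, hvw, hi, rfl, rfl⟩ := hs.adj_iff.1 hf
    exact ⟨s(v, w), hvw, v, w, rfl, i, hi, rfl⟩

theorem pairwiseDisjoint_edgePath (hs : IsSubdivision G k H ι p) :
    G.edgeSet.PairwiseDisjoint (edgePath p k) := by
  intro e he e' he' hne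
  rw [Function.onFun, Set.disjoint_left]
  rintro _ ⟨v, w, rfl, i, hi, rfl⟩ ⟨v', w', rfl, j, hj, h⟩
  exact hne (hs.mk_eq_mk_of_pathEdge_eq he he' hi hj h)

theorem ncard_eq_sum_ncard_inter_edgePath [Finite W] [Fintype G.edgeSet]
    (hs : IsSubdivision G k H ι p) (hP : P ⊆ H.edgeSet) :
    P.ncard = ∑ e ∈ G.edgeFinset, (P ∩ edgePath p k e).ncard := by
  have hunion : P = ⋃ e ∈ G.edgeSet, P ∩ edgePath p k e := by
    rw [← Set.inter_iUnion₂, hs.iUnion_edgePath, Set.inter_eq_left.2 hP]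
  have hdisj : G.edgeSet.PairwiseDisjoint fun e => P ∩ edgePath p k e :=
    hs.pairwiseDisjoint_edgePath.mono fun _ => Set.inter_subset_right
  conv_lhs => rw [hunion]
  rw [Set.Finite.ncard_biUnion G.edgeSet.toFinite (fun _ _ => Set.toFinite _) hdisj,
    ← G.coe_edgeFinset, finsum_mem_coe_finset]

theorem ncard_inter_edgePath_mk [DecidablePred (· ∈ P)] (hs : IsSubdivision G k H ι p)
    (hvw : G.Adj v w) :
    (P ∩ edgePath p k s(v, w)).ncard = Nat.count (pathEdge p v w · ∈ P) (3 * k + 1) := by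
  have himage : P ∩ edgePath p k s(v, w) =
      pathEdge p v w '' ((Finset.range (3 * k + 1)).filter (pathEdge p v w · ∈ P)) := by
    rw [hs.edgePath_mk hvw]
    ext f
    simp only [Finset.coe_filter, Finset.mem_range, Nat.lt_succ_iff, Set.mem_inter_iff]
    constructor
    · rintro ⟨hf, i, hi, rfl⟩
      exact ⟨i, ⟨hi, hf⟩, rfl⟩
    · rintro ⟨i, ⟨hi, hf⟩, rfl⟩
      exact ⟨hf, i, hi, rfl⟩
  rw [himage, Set.InjOn.ncard_image, Set.ncard_coe_finset, Nat.count_eq_card_filter_range]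
  exact (hs.pathEdge_injOn hvw).mono fun i hi => by
    simpa [Nat.lt_succ_iff] using (Finset.mem_filter.1 hi).1

end IsSubdivision

end Subdivision

section YellowPattern

variable {a b : Prop} {i j k : ℕ}

/-- The colouring of the path replacing an edge whose ends are yellow when `a`, respectively `b`,
holds, as a function of the position `i` on the path: it has period three, with values
`a, b, ¬(a ∧ b)`. When `a ∨ b`, every three consecutive vertices include exactly two yellow ones. -/
def YellowAt (a b : Prop) (i : ℕ) : Prop :=
  i % 3 = 0 ∧ a ∨ i % 3 = 1 ∧ b ∨ i % 3 = 2 ∧ ¬ (a ∧ b)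

theorem yellowAt_three_mul : YellowAt a b (3 * k) ↔ a := by
  grind [YellowAt]

theorem yellowAt_three_mul_add_one : YellowAt a b (3 * k + 1) ↔ b := by
  grind [YellowAt]

theorem yellowAt_reverse (hij : i + j = 3 * k + 1) : YellowAt a b i ↔ YellowAt b a j := by
  grind [YellowAt]

theorem yellowAt_or_succ (hab : a ∨ b) (i : ℕ) : YellowAt a b i ∨ YellowAt a b (i + 1) := by
  grind [YellowAt]

theorem YellowAt.iff_not_add_two (h : YellowAt a b (i + 1)) (hab : a ∨ b) :
    YellowAt a b i ↔ ¬ YellowAt a b (i + 2) := by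
  grind [YellowAt]

theorem count_eq_of_iff_yellowAt_and {A : ℕ → Prop} [DecidablePred A] [Decidable (a ∧ b)]
    (hab : a ∨ b) (hA : ∀ i ≤ 3 * k, A i ↔ YellowAt a b i ∧ YellowAt a b (i + 1)) :
    Nat.count A (3 * k + 1) = k + if a ∧ b then 1 else 0 := by
  induction k with
  | zero =>
    have := hA 0 le_rfl
    simp only [Nat.count_succ]
    grind [YellowAt]
  | succ k ih =>
    have hprefix := ih fun i hi => hA i (by omega)
    have h1 := hA (3 * k + 1) (by omega)
    have h2 := hA (3 * k + 2) (by omega)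
    have h3 := hA (3 * k + 3) (by omega)
    simp only [mul_add, mul_one, Nat.count_succ] at hprefix ⊢
    grind [YellowAt]

end YellowPattern

section HeavyEdges

variable {V W : Type*} {G : SimpleGraph V} {k r : ℕ} {H : SimpleGraph W} {ι : V → W}
  {p : V → V → ℕ → W} {P : Set (Sym2 W)} {v w : V}

/-- The spanning subgraph of `G` formed by the edges `e` for which `P` contains more than `k` edges
of `S(e)`, the least possible number for a perfect edge dominating set `P`. -/
def heavySubgraph (G : SimpleGraph V) (p : V → V → ℕ → W) (k : ℕ) (P : Set (Sym2 W)) :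
    SimpleGraph V where
  Adj v w := G.Adj v w ∧ k < (P ∩ edgePath p k s(v, w)).ncard
  symm := ⟨fun v _ h => ⟨h.1.symm, Sym2.eq_swap (a := v) ▸ h.2⟩⟩
  loopless := ⟨fun _ h => h.1.ne rfl⟩

theorem heavySubgraph_le : heavySubgraph G p k P ≤ G := fun _ _ h => h.1

namespace IsSubdivision

theorem isPerfectTrace (hs : IsSubdivision G k H ι p) (hP : IsPEDS H P) (hvw : G.Adj v w) :
    IsPerfectTrace (3 * k) (pathEdge p v w · ∈ P) (p v w · ∈ coveredVertices P) where
  covered_iff_not _ hi hn := hP.mem_coveredVertices_iff_notMem (hs.adj_path_succ hvw hi) hn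
  covered_iff_or i hi := by
    constructor
    · rintro ⟨y, hy⟩
      rcases (hs.adj_path_succ_iff hvw hi).1 (hP.1 hy) with rfl | rfl
      · exact .inl (by rwa [pathEdge, Sym2.eq_swap])
      · exact .inr hy
    · rintro (h | h)
      · exact ⟨p v w i, by rwa [Sym2.eq_swap]⟩
      · exact ⟨p v w (i + 2), h⟩

theorem le_ncard_inter_edgePath (hs : IsSubdivision G k H ι p) (hP : IsPEDS H P)
    (hvw : G.Adj v w) : k ≤ (P ∩ edgePath p k s(v, w)).ncard := by
  classical
  rw [hs.ncard_inter_edgePath_mk hvw]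
  exact (hs.isPerfectTrace hP hvw).le_count

theorem heavySubgraph_degree_pos (hs : IsSubdivision G k H ι p) (hP : IsPEDS H P)
    [(heavySubgraph G p k P).LocallyFinite] (hv : ι v ∈ coveredVertices P) :
    1 ≤ (heavySubgraph G p k P).degree v := by
  classical
  obtain ⟨y, hy⟩ := hv
  obtain ⟨w, hvw, rfl⟩ := hs.adj_ι_iff.1 (hP.1 hy)
  refine (SimpleGraph.degree_pos_iff_exists_adj _ v).2 ⟨w, hvw, ?_⟩
  rw [hs.ncard_inter_edgePath_mk hvw]
  refine (hs.isPerfectTrace hP hvw).lt_count ?_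
  rwa [pathEdge, hs.path_zero hvw]

theorem isBipartiteWith_sdiff_heavySubgraph (hs : IsSubdivision G k H ι p) (hP : IsPEDS H P) :
    (G \ heavySubgraph G p k P).IsBipartiteWith (ι ⁻¹' coveredVertices P)
      (ι ⁻¹' coveredVertices P)ᶜ where
  disjoint := disjoint_compl_right
  mem_of_adj v w := by
    classical
    rintro ⟨hvw, hlight⟩
    have hcount : Nat.count (pathEdge p v w · ∈ P) (3 * k + 1) = k := by
      rw [← hs.ncard_inter_edgePath_mk (P := P) hvw]
      exact (not_lt.1 fun h => hlight ⟨hvw, h⟩).antisymm (hs.le_ncard_inter_edgePath hP hvw)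
    have hends := ((hs.isPerfectTrace hP hvw).of_count_eq hcount).2
    rw [hs.path_zero hvw, hs.path_last hvw] at hends
    simp only [Set.mem_compl_iff, Set.mem_preimage]
    tauto

variable [Fintype V] [Finite W]

theorem sum_degree_heavySubgraph_le [DecidableRel G.Adj] [DecidableRel (heavySubgraph G p k P).Adj]
    (hs : IsSubdivision G k H ι p) (hP : IsPEDS H P) (hG : G.IsRegularOfDegree r) :
    Fintype.card V * r * k + ∑ v, (heavySubgraph G p k P).degree v ≤ 2 * P.ncard := by
  rw [← two_mul_sum_edgeFinset_add_ite hG heavySubgraph_le,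
    hs.ncard_eq_sum_ncard_inter_edgePath hP.1]
  refine Nat.mul_le_mul_left 2 (Finset.sum_le_sum fun e he => ?_)
  induction e with | _ v w
  have hvw : G.Adj v w := by simpa using he
  split_ifs with hheavy
  · exact hheavy.2
  · exact hs.le_ncard_inter_edgePath hP hvw

theorem exists_isEfficientColoring (hs : IsSubdivision G k H ι p) (hG : IsRegular' G r)
    (hr : 1 ≤ r) (hP : IsPEDS H P)
    (hcard : (2 * r - 1 : ℤ) * (2 * P.ncard - Fintype.card V * r * k) = Fintype.card V * r) :
    ∃ Y, IsEfficientColoring G Y := by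
  classical
  obtain rfl | hr : 1 = r ∨ 2 ≤ r := hr.eq_or_lt
  · exact ⟨_, .univ_of_isRegular'_one hG⟩
  set Y := ι ⁻¹' coveredVertices P
  have hbip : (G \ heavySubgraph G p k P).IsBipartiteWith Y.toFinset (Y.toFinset : Set V)ᶜ := by
    simpa using hs.isBipartiteWith_sdiff_heavySubgraph hP
  have hle : (2 * r - 1 : ℤ) * ∑ v, (heavySubgraph G p k P).degree v ≤ Fintype.card V * r := by
    rw [← hcard]
    have hsum := hs.sum_degree_heavySubgraph_le hP hG.isRegularOfDegree
    zify at hsum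
    gcongr
    · omega
    · push_cast
      linarith
  have hpos (v : V) (hv : v ∈ Y.toFinset) : 1 ≤ (heavySubgraph G p k P).degree v :=
    hs.heavySubgraph_degree_pos hP (Set.mem_toFinset (s := Y).1 hv)
  obtain ⟨hone, hzero⟩ := degree_eq_of_two_mul_sub_one_mul_sum_degree_le hG.isRegularOfDegree hr
    heavySubgraph_le hbip hpos hle
  exact ⟨_, .of_isBipartiteWith_sdiff heavySubgraph_le hbip hone hzero⟩

end IsSubdivision

end HeavyEdges

section SubdivisionColoring

variable {V W : Type*} {G : SimpleGraph V} {k r : ℕ} {H : SimpleGraph W} {ι : V → W}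
  {p : V → V → ℕ → W} {Y : Set V} {u v w v' w' : V} {i j : ℕ}

/-- The extension of a colouring of `G` to its subdivision by `YellowAt` along each path, again
encoded by the set of yellow vertices. -/
def subdivisionColoring (G : SimpleGraph V) (p : V → V → ℕ → W) (k : ℕ) (Y : Set V) : Set W :=
  {x | ∃ v w i, G.Adj v w ∧ i ≤ 3 * k + 1 ∧ x = p v w i ∧ YellowAt (v ∈ Y) (w ∈ Y) i}

namespace IsSubdivision

theorem yellowAt_iff_of_path_eq_ι (hs : IsSubdivision G k H ι p) (hvw : G.Adj v w)
    (hi : i ≤ 3 * k + 1) (hu : p v w i = ι u) : YellowAt (v ∈ Y) (w ∈ Y) i ↔ u ∈ Y := by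
  rcases hs.path_eq_ι hvw hi hu with ⟨rfl, rfl⟩ | ⟨rfl, rfl⟩
  · exact yellowAt_three_mul (k := 0)
  · exact yellowAt_three_mul_add_one

theorem yellowAt_congr (hs : IsSubdivision G k H ι p) (hvw : G.Adj v w) (hvw' : G.Adj v' w')
    (hi : i ≤ 3 * k + 1) (hj : j ≤ 3 * k + 1) (h : p v w i = p v' w' j) :
    YellowAt (v ∈ Y) (w ∈ Y) i ↔ YellowAt (v' ∈ Y) (w' ∈ Y) j := by
  by_cases hx : p v w i ∈ Set.range ι
  · obtain ⟨u, hu⟩ := hx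
    rw [hs.yellowAt_iff_of_path_eq_ι hvw hi hu.symm,
      hs.yellowAt_iff_of_path_eq_ι hvw' hj (h ▸ hu.symm)]
  · have hi0 : i ≠ 0 := by
      rintro rfl
      exact hx ⟨v, (hs.path_zero hvw).symm⟩
    have hi_last : i ≠ 3 * k + 1 := by
      rintro rfl
      exact hx ⟨w, (hs.path_last hvw).symm⟩
    rcases hs.path_eq_path hvw hvw' (by omega) (by omega) hj h with
      ⟨rfl, rfl, rfl⟩ | ⟨rfl, rfl, hij⟩
    · rfl
    · exact yellowAt_reverse hij

theorem path_mem_subdivisionColoring (hs : IsSubdivision G k H ι p) (hvw : G.Adj v w)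
    (hi : i ≤ 3 * k + 1) :
    p v w i ∈ subdivisionColoring G p k Y ↔ YellowAt (v ∈ Y) (w ∈ Y) i := by
  refine ⟨?_, fun h => ⟨v, w, i, hvw, hi, rfl, h⟩⟩
  rintro ⟨v', w', j, hvw', hj, h, hyellow⟩
  exact (hs.yellowAt_congr hvw hvw' hi hj h).2 hyellow

theorem path_one_mem_subdivisionColoring (hs : IsSubdivision G k H ι p) (hvw : G.Adj v w) :
    p v w 1 ∈ subdivisionColoring G p k Y ↔ w ∈ Y :=
  (hs.path_mem_subdivisionColoring hvw (by omega)).trans (yellowAt_three_mul_add_one (k := 0))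

theorem mem_of_ι_mem_subdivisionColoring (hs : IsSubdivision G k H ι p)
    (hv : ι v ∈ subdivisionColoring G p k Y) : v ∈ Y := by
  obtain ⟨a, b, i, hab, hi, hx, hyellow⟩ := hv
  exact (hs.yellowAt_iff_of_path_eq_ι hab hi hx.symm).1 hyellow

theorem isEfficientColoring_subdivisionColoring (hs : IsSubdivision G k H ι p)
    (hY : IsEfficientColoring G Y) : IsEfficientColoring H (subdivisionColoring G p k Y) := by
  have hor {v w : V} (hvw : G.Adj v w) : v ∈ Y ∨ w ∈ Y := by
    have := hY.1 v w
    tauto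
  refine ⟨fun x y hx hy hxy => ?_, fun x hx => ?_⟩
  · obtain ⟨v, w, i, hvw, hi, rfl, rfl⟩ := hs.adj_iff.1 hxy
    rw [hs.path_mem_subdivisionColoring hvw (by omega)] at hx hy
    exact (yellowAt_or_succ (hor hvw) i).elim hx hy
  rcases hs.eq_ι_or_eq_path x with ⟨v, rfl⟩ | ⟨v, w, i, hvw, hi, rfl⟩
  · obtain ⟨w, ⟨hw, hvw⟩, hw_unique⟩ := hY.2 v (hs.mem_of_ι_mem_subdivisionColoring hx)
    refine ⟨p v w 1, ⟨(hs.path_one_mem_subdivisionColoring hvw).2 hw,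
      hs.adj_ι_iff.2 ⟨w, hvw, rfl⟩⟩, ?_⟩
    rintro y ⟨hy, hxy⟩
    obtain ⟨u, hvu, rfl⟩ := hs.adj_ι_iff.1 hxy
    rw [hw_unique u ⟨(hs.path_one_mem_subdivisionColoring hvu).1 hy, hvu⟩]
  · rw [hs.path_mem_subdivisionColoring hvw (by omega)] at hx
    have hiff : p v w i ∈ subdivisionColoring G p k Y ↔
        p v w (i + 2) ∉ subdivisionColoring G p k Y := by
      rw [hs.path_mem_subdivisionColoring hvw (by omega),
        hs.path_mem_subdivisionColoring hvw (by omega)]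
      exact hx.iff_not_add_two (hor hvw)
    simp only [hs.adj_path_succ_iff hvw hi, ExistsUnique]
    grind

theorem ncard_inter_edgePath_of_isEfficientColoring [Decidable (v ∈ Y ∧ w ∈ Y)]
    (hs : IsSubdivision G k H ι p) (hY : IsEfficientColoring G Y) (hvw : G.Adj v w) :
    ((H.induce (subdivisionColoring G p k Y)).spanningCoe.edgeSet ∩
      edgePath p k s(v, w)).ncard = k + if v ∈ Y ∧ w ∈ Y then 1 else 0 := by
  classical
  rw [hs.ncard_inter_edgePath_mk hvw]
  refine count_eq_of_iff_yellowAt_and ?_ fun i hi => ?_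
  · have := hY.1 v w
    tauto
  · rw [pathEdge, SimpleGraph.mem_edgeSet, spanningCoe_induce_adj,
      hs.path_mem_subdivisionColoring hvw (by omega),
      hs.path_mem_subdivisionColoring hvw (by omega), and_iff_right (hs.adj_path_succ hvw hi)]

variable [Fintype V] [Finite W]

theorem two_mul_ncard_of_isEfficientColoring [DecidableRel G.Adj]
    [DecidableRel (G.induce Y).spanningCoe.Adj] (hs : IsSubdivision G k H ι p)
    (hG : G.IsRegularOfDegree r) (hY : IsEfficientColoring G Y) :
    2 * (H.induce (subdivisionColoring G p k Y)).spanningCoe.edgeSet.ncard =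
      Fintype.card V * r * k + ∑ v, (G.induce Y).spanningCoe.degree v := by
  classical
  rw [hs.ncard_eq_sum_ncard_inter_edgePath (SimpleGraph.edgeSet_mono spanningCoe_induce_le),
    ← two_mul_sum_edgeFinset_add_ite hG spanningCoe_induce_le]
  congr 1
  refine Finset.sum_congr rfl fun e he => ?_
  induction e with | _ v w
  have hvw : G.Adj v w := by simpa using he
  rw [hs.ncard_inter_edgePath_of_isEfficientColoring hY hvw]
  simp only [SimpleGraph.mem_edgeSet, spanningCoe_induce_adj, hvw, true_and]

theorem exists_isPEDS (hs : IsSubdivision G k H ι p) (hG : IsRegular' G r)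
    (hY : IsEfficientColoring G Y) :
    ∃ P, IsPEDS H P ∧
      (2 * r - 1 : ℤ) * (2 * P.ncard - Fintype.card V * r * k) = Fintype.card V * r := by
  classical
  refine ⟨_, (hs.isEfficientColoring_subdivisionColoring hY).isEEDS.isPEDS, ?_⟩
  have hcard := hs.two_mul_ncard_of_isEfficientColoring hG.isRegularOfDegree hY
  have hbip : (G \ (G.induce Y).spanningCoe).IsBipartiteWith Y.toFinset (Y.toFinset : Set V)ᶜ := by
    simpa using hY.isBipartiteWith_sdiff
  have hsum := two_mul_sub_one_mul_sum_degree hG.isRegularOfDegree spanningCoe_induce_le hbip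
    (fun v hv => hY.degree_eq_one (Set.mem_toFinset.1 hv))
    (fun v hv => degree_spanningCoe_induce_of_notMem fun h => hv (Set.mem_toFinset.2 h))
  zify at hcard
  rw [hcard, add_sub_cancel_left, ← Nat.cast_sum, hsum]

end IsSubdivision

end SubdivisionColoring

theorem cast_eq_div_mul_iff (m n r k : ℕ) :
    (m : ℚ) = (n * r) / (2 * (2 * r - 1)) * (2 * r * k - k + 1) ↔
      (2 * r - 1 : ℤ) * (2 * m - n * r * k) = n * r := by
  have hne : (2 * r - 1 : ℚ) ≠ 0 := by exact_mod_cast (by omega : (2 * r - 1 : ℤ) ≠ 0)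
  rw [div_mul_eq_mul_div, eq_div_iff (mul_ne_zero two_ne_zero hne), ← Int.cast_inj (α := ℚ)]
  push_cast
  constructor <;> intro h <;> linarith

/-- For an `r`-regular graph `G` (`r ≥ 1`) on `n` vertices and its
`3k`-subdivision `S(G)`, the following are equivalent:
(i) `S(G)` has a perfect edge dominating set of size exactly
`(n r / (2 (2r - 1))) (2rk - k + 1)`;
(ii) the vertices of `G` can be 2-colored with colors `W`, `Y` (here given by the
set `Y` of yellow vertices) so that no two `W`-vertices are adjacent and every
`Y`-vertex has exactly one `Y`-neighbor;
(iii) `G` admits an efficient edge dominating set. -/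
theorem subdivision_peds_tfae {V W : Type*} [Fintype V] [Fintype W]
    (r : ℕ) (hr : 1 ≤ r) (G : SimpleGraph V) (hreg : IsRegular' G r) (k : ℕ)
    (H : SimpleGraph W) (ι : V → W) (p : V → V → ℕ → W)
    (hsub : IsSubdivision G k H ι p) :
    ((∃ P : Set (Sym2 W), IsPEDS H P ∧
        (P.ncard : ℚ) =
          ((Fintype.card V : ℚ) * r) / (2 * (2 * r - 1)) * (2 * r * k - k + 1)) ↔
      (∃ Y : Set V, (∀ u v : V, u ∉ Y → v ∉ Y → ¬ G.Adj u v) ∧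
        (∀ u ∈ Y, ∃! v, v ∈ Y ∧ G.Adj u v))) ∧
    ((∃ Y : Set V, (∀ u v : V, u ∉ Y → v ∉ Y → ¬ G.Adj u v) ∧
        (∀ u ∈ Y, ∃! v, v ∈ Y ∧ G.Adj u v)) ↔
      (∃ D : Set (Sym2 V), IsEEDS G D)) := by
  refine ⟨⟨?_, ?_⟩, exists_isEfficientColoring_iff_exists_isEEDS⟩
  · rintro ⟨P, hP, hcard⟩
    exact hsub.exists_isEfficientColoring hreg hr hP ((cast_eq_div_mul_iff ..).1 hcard)
  · rintro ⟨Y, hY⟩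
    obtain ⟨P, hP, hcard⟩ := hsub.exists_isPEDS hreg hY
    exact ⟨P, hP, (cast_eq_div_mul_iff ..).2 hcard⟩
end

section
/- Every connected finite simple graph contains a vertex of eccentricity at most 2 or an induced subgraph isomorphic to the path on 5 vertices. -/
/-!
Let `B v` be the set of vertices within distance 2 of `v`, and choose `v` with `B v`
inclusion-maximal. If `v` is not principal, some `x` lies at distance exactly 3 from `v`. Among the
neighbours of `v` having a common neighbour with `x`, choose `a` such that the set of its private
neighbours, those neither equal nor adjacent to `v`, is inclusion-maximal. Since `x` lies in `B a`
but not in `B v`, maximality of `B v` gives a vertex `u` in `B v` but not in `B a`; let `c` be a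
common neighbour of `v` and `u`. If `w` is a private neighbour of `a`, then the path
`w, a, v, c, u` can only fail to be induced through the edge `wc`. Hence `c` inherits all private
neighbours of `a`, in particular one adjacent to `x`, and has `u` in addition, contradicting the
choice of `a`.
-/

section

open SimpleGraph

variable {V : Type*} {G : SimpleGraph V}

theorem comap_isIndContained_of_injective_neighborSet {W : Type*} {f : W → V}
    (hf : (G.comap f).neighborSet.Injective) : G.comap f ⊴ G := by
  have f_injective : f.Injective := fun i j hij => hf <| by
    ext k
    simp only [mem_neighborSet, comap_adj, hij]
  exact ⟨Embedding.comap ⟨f, f_injective⟩ G⟩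

-- In `pathGraph 3` the two ends have the same neighbour.
theorem injective_neighborSet_pathGraph {n : ℕ} (hn : n ≠ 3) :
    (pathGraph n).neighborSet.Injective := by
  refine .of_lt_imp_ne fun i j hlt heq => ?_
  have adj_iff (k : ℕ) (hk : k < n) :
      ((i : ℕ) + 1 = k ∨ k + 1 = i) ↔ ((j : ℕ) + 1 = k ∨ k + 1 = j) := by
    simpa only [mem_neighborSet, pathGraph_adj] using Set.ext_iff.1 heq ⟨k, hk⟩
  have j_eq : (j : ℕ) = i + 2 := by
    have := adj_iff (i + 1) (by lia)
    lia
  have i_eq_zero : (i : ℕ) = 0 := by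
    have := adj_iff (i - 1) (by lia)
    lia
  have := adj_iff (j + 1) (by lia)
  lia

theorem pathGraph_isIndContained_of_adj_iff {n : ℕ} (hn : n ≠ 3) {f : Fin n → V}
    (hf : ∀ i j, i < j → (G.Adj (f i) (f j) ↔ (i : ℕ) + 1 = j)) : pathGraph n ⊴ G := by
  have comap_eq : G.comap f = pathGraph n := by
    ext i j
    rw [comap_adj, pathGraph_adj]
    rcases lt_trichotomy i j with hij | rfl | hij
    · grind
    · simp
    · grind [G.adj_comm (f i) (f j)]
  exact comap_eq ▸
    comap_isIndContained_of_injective_neighborSet (comap_eq ▸ injective_neighborSet_pathGraph hn)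

theorem exists_dist_eq_of_le_dist {u v : V} {n : ℕ} (huv : G.Reachable u v)
    (hn : n ≤ G.dist u v) : ∃ x, G.dist u x = n := by
  obtain ⟨p, hp⟩ := huv.exists_walk_length_eq_dist
  refine ⟨p.getVert n, ?_⟩
  rw [← length_eq_dist_of_subwalk hp (p.isSubwalk_take n), p.take_length, hp, min_eq_left hn]

theorem exists_adj_adj_adj_of_dist_eq_three {u v : V} (h : G.dist u v = 3) :
    ∃ a, G.Adj u a ∧ ∃ b, G.Adj a b ∧ G.Adj b v := by
  obtain ⟨p, hp⟩ := exists_walk_of_dist_ne_zero (h.trans_ne three_ne_zero)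
  rw [h] at hp
  refine ⟨p.getVert 1, ?_, p.getVert 2, p.adj_getVert_succ (by lia), ?_⟩
  · simpa only [p.getVert_zero] using p.adj_getVert_succ (i := 0) (by lia)
  · simpa only [p.getVert_of_length_le hp.le] using p.adj_getVert_succ (i := 2) (by lia)

-- `SimpleGraph.ball` is an open ball, so radius 3 means distance at most 2.
theorem mem_ball_three_iff {u v : V} :
    u ∈ G.ball v 3 ↔ v = u ∨ G.Adj v u ∨ ∃ w, G.Adj v w ∧ G.Adj w u := by
  have notMem_iff : u ∉ G.ball v 3 ↔ 2 < G.edist v u := by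
    rw [mem_ball, not_lt, edist_comm, ← two_add_one_eq_three,
      ENat.add_one_le_iff (ENat.ofNat_ne_top 2)]
  rw [← not_iff_not, notMem_iff, two_lt_edist_iff, Set.eq_empty_iff_forall_notMem]
  simp only [mem_commonNeighbors, G.adj_comm u, not_or, not_exists]

variable (G) in
/-- The private neighbours of `a` relative to `v`: the neighbours of `a` outside the closed
neighbourhood of `v`. -/
def privateNeighborSet (v a : V) : Set V :=
  G.neighborSet a \ insert v (G.neighborSet v)

theorem mem_privateNeighborSet {v a w : V} :
    w ∈ privateNeighborSet G v a ↔ G.Adj a w ∧ w ≠ v ∧ ¬ G.Adj v w := by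
  simp [privateNeighborSet]

theorem privateNeighborSet_ssubset_of_notMem_ball {v a c u : V} (hP : ¬ pathGraph 5 ⊴ G)
    (hva : G.Adj v a) (hvc : G.Adj v c) (hcu : G.Adj c u) (hau : u ∉ G.ball a 3) :
    privateNeighborSet G v a ⊂ privateNeighborSet G v c := by
  obtain ⟨-, not_au, not_adj_of_adj⟩ :
      a ≠ u ∧ ¬ G.Adj a u ∧ ∀ w, G.Adj a w → ¬ G.Adj w u := by
    simpa only [mem_ball_three_iff, not_or, not_exists, not_and] using hau
  have not_vu : ¬ G.Adj v u := not_adj_of_adj v hva.symm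
  have not_ac : ¬ G.Adj a c := fun hac => not_adj_of_adj c hac hcu
  have u_ne_v : u ≠ v := by
    rintro rfl
    exact not_au hva.symm
  have hu : u ∈ privateNeighborSet G v c := mem_privateNeighborSet.2 ⟨hcu, u_ne_v, not_vu⟩
  refine Set.ssubset_iff_exists.2
    ⟨fun w hw => ?_, u, hu, fun hua => not_au (mem_privateNeighborSet.1 hua).1⟩
  obtain ⟨haw, w_ne_v, not_vw⟩ := mem_privateNeighborSet.1 hw
  refine mem_privateNeighborSet.2 ⟨?_, w_ne_v, not_vw⟩
  by_contra not_cw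
  refine hP (pathGraph_isIndContained_of_adj_iff (f := ![w, a, v, c, u]) (by decide) ?_)
  simp [Fin.forall_fin_succ, haw.symm, hva.symm, hvc, hcu, G.adj_comm w v, not_vw, G.adj_comm w c,
    not_cw, not_adj_of_adj w haw, not_ac, not_au, not_vu]

theorem exists_adj_ball_three_ssubset {v x : V} (hP : ¬ pathGraph 5 ⊴ G)
    (hfin : (G.neighborSet v).Finite) (hx : G.dist v x = 3) :
    ∃ a, G.Adj v a ∧ G.ball v 3 ⊂ G.ball a 3 := by
  have x_notMem : x ∉ G.ball v 3 := by
    have hvx : G.Reachable v x := .of_dist_ne_zero (by lia)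
    rw [mem_ball, edist_comm, ← hvx.coe_dist_eq_edist, hx]
    exact lt_irrefl _
  obtain ⟨a, ⟨hva, b, hab, hbx⟩, a_max⟩ :=
    (hfin.subset (Set.sep_subset _ fun a => ∃ b, G.Adj a b ∧ G.Adj b x)).exists_maximalFor
      (privateNeighborSet G v) _ (exists_adj_adj_adj_of_dist_eq_three hx)
  have x_mem : x ∈ G.ball a 3 := mem_ball_three_iff.2 (.inr (.inr ⟨b, hab, hbx⟩))
  refine ⟨a, hva, Set.ssubset_iff_exists.2 ⟨fun u hu => ?_, x, x_mem, x_notMem⟩⟩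
  by_contra hau
  obtain ⟨c, hvc, hcu⟩ : ∃ c, G.Adj v c ∧ G.Adj c u := by
    rcases mem_ball_three_iff.1 hu with rfl | hvu | hvu
    · exact absurd (mem_ball_three_iff.2 (.inr (.inl hva.symm))) hau
    · exact absurd (mem_ball_three_iff.2 (.inr (.inr ⟨v, hva.symm, hvu⟩))) hau
    · exact hvu
  have hac := privateNeighborSet_ssubset_of_notMem_ball hP hva hvc hcu hau
  have hb : b ∈ privateNeighborSet G v a := by
    refine mem_privateNeighborSet.2 ⟨hab, ?_, fun hvb => ?_⟩
    · rintro rfl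
      exact x_notMem (mem_ball_three_iff.2 (.inr (.inl hbx)))
    · exact x_notMem (mem_ball_three_iff.2 (.inr (.inr ⟨b, hvb, hbx⟩)))
  have hcb : G.Adj c b := (mem_privateNeighborSet.1 (hac.subset hb)).1
  exact hac.not_subset (a_max ⟨hvc, b, hcb, hbx⟩ hac.subset)

end

/-- Every connected finite graph contains a vertex of eccentricity at most `2`
(a principal vertex) or an induced path on `5` vertices. -/
theorem principal_or_p5 {V : Type*} [Fintype V] (G : SimpleGraph V)
    (hconn : G.Connected) :
    (∃ v : V, ∀ u : V, G.dist v u ≤ 2) ∨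
    Nonempty (SimpleGraph.pathGraph 5 ↪g G) := by
  refine or_iff_not_imp_right.2 fun hP => ?_
  have := hconn.nonempty
  obtain ⟨v, -, hv⟩ :=
    Set.finite_univ.exists_maximalFor (G.ball · 3) Set.univ Set.univ_nonempty
  refine ⟨v, fun u => ?_⟩
  by_contra! hu
  obtain ⟨x, hx⟩ := exists_dist_eq_of_le_dist (hconn v u) hu
  obtain ⟨a, -, hva⟩ := exists_adj_ball_three_ssubset hP (Set.toFinite _) hx
  exact hva.not_subset (hv (Set.mem_univ a) hva.subset)
end

section
/- Let G be a finite simple graph, D a dominating set of G, P a perfect edge dominating set of G, and (B,Y,W) the 3-coloring associated to P. If D ⊆ B, then P = E(G), the trivial perfect edge dominating set. -/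
/-- A black vertex: incident to at least two edges of `P`. -/
def Blackv {V : Type*} (P : Set (Sym2 V)) (v : V) : Prop :=
  ∃ e ∈ P, ∃ f ∈ P, e ≠ f ∧ v ∈ e ∧ v ∈ f

/-- A yellow vertex: incident to exactly one edge of `P`. -/
def Yellowv {V : Type*} (P : Set (Sym2 V)) (v : V) : Prop := ∃! e, e ∈ P ∧ v ∈ e

/-- A white vertex: incident to no edge of `P`. -/
def Whitev {V : Type*} (P : Set (Sym2 V)) (v : V) : Prop := ∀ e ∈ P, v ∉ e


/-- `D` is a (vertex) dominating set of `G`: every vertex is in `D` or adjacent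
to a vertex of `D`. -/
def IsDominating {V : Type*} (G : SimpleGraph V) (D : Set V) : Prop :=
  ∀ v : V, v ∈ D ∨ ∃ u ∈ D, G.Adj u v

/-!
If neither end of an edge `uv` is white, then `uv ∈ P`: otherwise only one edge of `P` dominates
`uv`, and this edge must contain both `u` and `v`, so it is `uv` itself. Hence `P` is trivial as
soon as `W = ∅`. All edges at a black vertex belong to `P`, so neither it nor any neighbour is
white; when the black vertices dominate, this leaves no white vertex.
-/

section

variable {V : Type*} {G : SimpleGraph V} {P : Set (Sym2 V)} {u v : V}

theorem not_whitev_iff : ¬ Whitev P v ↔ ∃ e ∈ P, v ∈ e := by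
  simp [Whitev]

theorem Blackv.not_whitev (hv : Blackv P v) : ¬ Whitev P v := by
  obtain ⟨e, he, -, -, -, hve, -⟩ := hv
  exact not_whitev_iff.2 ⟨e, he, hve⟩

namespace IsPEDS

theorem eq_of_edgeDom (hP : IsPEDS G P) {e₁ e₂ f : Sym2 V} (hf : f ∈ G.edgeSet) (hfP : f ∉ P)
    (he₁ : e₁ ∈ P) (hdom₁ : edgeDom e₁ f) (he₂ : e₂ ∈ P) (hdom₂ : edgeDom e₂ f) : e₁ = e₂ :=
  (hP.2 f hf hfP).unique ⟨he₁, hdom₁⟩ ⟨he₂, hdom₂⟩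

theorem mem_of_blackv (hP : IsPEDS G P) {f : Sym2 V} (hf : f ∈ G.edgeSet) (hvf : v ∈ f)
    (hv : Blackv P v) : f ∈ P := by
  obtain ⟨e₁, he₁, e₂, he₂, hne, hve₁, hve₂⟩ := hv
  by_contra hfP
  exact hne (hP.eq_of_edgeDom hf hfP he₁ ⟨v, hve₁, hvf⟩ he₂ ⟨v, hve₂, hvf⟩)

theorem not_whitev_of_adj_blackv (hP : IsPEDS G P) (huv : G.Adj u v) (hu : Blackv P u) :
    ¬ Whitev P v :=
  not_whitev_iff.2 ⟨s(u, v), hP.mem_of_blackv huv (Sym2.mem_mk_left u v) hu, Sym2.mem_mk_right u v⟩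

theorem mk_mem_of_not_whitev (hP : IsPEDS G P) (huv : G.Adj u v) (hu : ¬ Whitev P u)
    (hv : ¬ Whitev P v) : s(u, v) ∈ P := by
  obtain ⟨e, he, hue⟩ := not_whitev_iff.1 hu
  obtain ⟨f, hf, hvf⟩ := not_whitev_iff.1 hv
  by_contra huvP
  obtain rfl : e = f := hP.eq_of_edgeDom huv huvP
    he ⟨u, hue, Sym2.mem_mk_left u v⟩ hf ⟨v, hvf, Sym2.mem_mk_right u v⟩
  have he_eq : e = s(u, v) := (Sym2.mem_and_mem_iff huv.ne).1 ⟨hue, hvf⟩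
  exact huvP (he_eq ▸ he)

theorem eq_edgeSet_of_forall_not_whitev (hP : IsPEDS G P) (hW : ∀ v, ¬ Whitev P v) :
    P = G.edgeSet := by
  refine hP.1.antisymm fun e => ?_
  induction e with
  | _ u v => exact fun huv => hP.mk_mem_of_not_whitev huv (hW u) (hW v)

end IsPEDS

theorem dominating_black_trivial_general {D : Set V} (hD : IsDominating G D) (hP : IsPEDS G P)
    (hblack : ∀ v ∈ D, Blackv P v) : P = G.edgeSet := by
  refine hP.eq_edgeSet_of_forall_not_whitev fun v => ?_
  rcases hD v with hv | ⟨u, hu, huv⟩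
  · exact (hblack v hv).not_whitev
  · exact hP.not_whitev_of_adj_blackv huv (hblack u hu)

end

/-- If a dominating set `D` consists of black vertices of a perfect edge
dominating set `P`, then `P` is the trivial perfect edge dominating set `E(G)`. -/
theorem dominating_black_trivial {V : Type*} [Fintype V] (G : SimpleGraph V)
    (D : Set V) (hD : IsDominating G D) (P : Set (Sym2 V)) (hP : IsPEDS G P)
    (hblack : ∀ v ∈ D, Blackv P v) : P = G.edgeSet :=
  dominating_black_trivial_general hD hP hblack
end

section
/- Let G be a connected finite simple graph that has a dominating clique on p vertices with p ≥ 4. Then G has exactly one perfect edge dominating set, namely the trivial one E(G). -/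
/-!
If two different edges of a PEDS `P` dominate an edge `f`, then `f ∈ P`. Hence the endpoint set `S`
of `P` spans only edges of `P`, and at each vertex of a triangle inside `S` two edges of `P` meet,
so that every edge at that vertex is in `P`. Since every edge of `G` meets `S`, a clique has at most
one vertex outside `S`; if it has at least four vertices, three of them form a triangle in `S`,
which first forces the whole clique into `S` and then, when the clique is dominating, every vertex.
-/

/-- The set of vertices that are an endpoint of some edge in `P`; a PEDS is trivial as soon as this
is the whole vertex set. -/
def endpointSet {V : Type*} (P : Set (Sym2 V)) : Set V := {v | ∃ e ∈ P, v ∈ e}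

section

variable {V : Type*} {G : SimpleGraph V} {P : Set (Sym2 V)} {K : Set V} {u v : V}

theorem left_mem_endpointSet (h : s(u, v) ∈ P) : u ∈ endpointSet P :=
  ⟨s(u, v), h, Sym2.mem_mk_left u v⟩

theorem right_mem_endpointSet (h : s(u, v) ∈ P) : v ∈ endpointSet P :=
  ⟨s(u, v), h, Sym2.mem_mk_right u v⟩

theorem edgeDom_mk_right {e : Sym2 V} : edgeDom e s(u, v) ↔ u ∈ e ∨ v ∈ e := by
  simp only [edgeDom, Sym2.mem_iff, and_or_left, exists_or, exists_eq_right]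

theorem subsingleton_inter_of_isClique_of_isIndepSet {S : Set V} (hK : G.IsClique K)
    (hS : G.IsIndepSet S) : (K ∩ S).Subsingleton := by
  intro a ha b hb
  by_contra hab
  exact hS ha.2 hb.2 hab (hK ha.1 hb.1 hab)

theorem isPEDS_edgeSet (G : SimpleGraph V) : IsPEDS G G.edgeSet :=
  ⟨subset_rfl, fun _ hf hf' => absurd hf hf'⟩

namespace IsPEDS

theorem mem_of_edgeDom_of_ne (hP : IsPEDS G P) {e e' f : Sym2 V} (hf : f ∈ G.edgeSet)
    (he : e ∈ P) (he' : e' ∈ P) (hne : e ≠ e') (hef : edgeDom e f) (hef' : edgeDom e' f) :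
    f ∈ P := by
  by_contra hfP
  exact hne ((hP.2 f hf hfP).unique ⟨he, hef⟩ ⟨he', hef'⟩)

theorem mem_of_mem_endpointSet (hP : IsPEDS G P) (huv : G.Adj u v)
    (hu : u ∈ endpointSet P) (hv : v ∈ endpointSet P) : s(u, v) ∈ P := by
  obtain ⟨e, he, hue⟩ := hu
  obtain ⟨e', he', hve'⟩ := hv
  by_cases hee' : e = e'
  · subst hee'
    exact (Sym2.mem_and_mem_iff huv.ne).1 ⟨hue, hve'⟩ ▸ he
  · exact hP.mem_of_edgeDom_of_ne huv he he' hee' (edgeDom_mk_right.2 (.inl hue))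
      (edgeDom_mk_right.2 (.inr hve'))

theorem mem_of_mem_of_mem_of_ne (hP : IsPEDS G P) {x y : V} (hx : s(u, x) ∈ P)
    (hy : s(u, y) ∈ P) (hxy : x ≠ y) (huv : G.Adj u v) : s(u, v) ∈ P :=
  hP.mem_of_edgeDom_of_ne huv hx hy (mt Sym2.congr_right.1 hxy)
    (edgeDom_mk_right.2 (.inl (Sym2.mem_mk_left u x)))
    (edgeDom_mk_right.2 (.inl (Sym2.mem_mk_left u y)))

theorem isIndepSet_compl_endpointSet (hP : IsPEDS G P) : G.IsIndepSet (endpointSet P)ᶜ := by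
  intro u hu v hv _ huv
  have huvP : s(u, v) ∉ P := fun h => hu (left_mem_endpointSet h)
  obtain ⟨e, ⟨he, hdom⟩, -⟩ := hP.2 s(u, v) huv huvP
  exact (edgeDom_mk_right.1 hdom).elim (fun h => hu ⟨e, he, h⟩) (fun h => hv ⟨e, he, h⟩)

theorem mem_of_mem_of_isClique (hP : IsPEDS G P) (hK : G.IsClique K) (hKP : K ⊆ endpointSet P)
    (hcard : 3 ≤ K.encard) (hu : u ∈ K) (huv : G.Adj u v) : s(u, v) ∈ P := by
  have htwo : 2 ≤ (K \ {u}).encard := by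
    refine (ENat.add_le_add_iff_right ENat.one_ne_top).1 ?_
    calc (2 : ℕ∞) + 1 = 3 := by norm_num
      _ ≤ K.encard := hcard
      _ = (K \ {u}).encard + 1 := (Set.encard_sdiff_singleton_add_one hu).symm
  obtain ⟨x, y, hx, hy, hxy⟩ := Set.one_lt_encard_iff.1 (lt_of_lt_of_le (by norm_num) htwo)
  have hmem : ∀ z ∈ K \ {u}, s(u, z) ∈ P := fun z hz =>
    hP.mem_of_mem_endpointSet (hK hu hz.1 (Ne.symm hz.2)) (hKP hu) (hKP hz.1)
  exact hP.mem_of_mem_of_mem_of_ne (hmem x hx) (hmem y hy) hxy huv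

theorem encard_le_encard_inter_endpointSet_add_one (hP : IsPEDS G P) (hK : G.IsClique K) :
    K.encard ≤ (K ∩ endpointSet P).encard + 1 := by
  have hdiff : (K \ endpointSet P).encard ≤ 1 := Set.encard_le_one_iff_subsingleton.2
    (subsingleton_inter_of_isClique_of_isIndepSet hK hP.isIndepSet_compl_endpointSet)
  rw [← Set.encard_sdiff_add_encard_inter K (endpointSet P), add_comm]
  gcongr

theorem subset_endpointSet_of_isClique (hP : IsPEDS G P) (hK : G.IsClique K)
    (hcard : 4 ≤ K.encard) : K ⊆ endpointSet P := by
  have hthree : 3 ≤ (K ∩ endpointSet P).encard := by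
    refine (ENat.add_le_add_iff_right ENat.one_ne_top).1 ?_
    calc (3 : ℕ∞) + 1 = 4 := by norm_num
      _ ≤ K.encard := hcard
      _ ≤ (K ∩ endpointSet P).encard + 1 := hP.encard_le_encard_inter_endpointSet_add_one hK
  obtain ⟨a, haK, haP⟩ : (K ∩ endpointSet P).Nonempty :=
    Set.encard_pos.1 (lt_of_lt_of_le (by norm_num) hthree)
  intro d hd
  obtain rfl | had := eq_or_ne a d
  · exact haP
  · exact right_mem_endpointSet (hP.mem_of_mem_of_isClique (hK.inter_left _)
      Set.inter_subset_right hthree ⟨haK, haP⟩ (hK haK hd had))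

theorem eq_edgeSet_of_endpointSet_eq_univ (hP : IsPEDS G P) (h : endpointSet P = Set.univ) :
    P = G.edgeSet := by
  refine hP.1.antisymm fun e he => ?_
  induction e with
  | _ u v => exact hP.mem_of_mem_endpointSet he (h ▸ Set.mem_univ u) (h ▸ Set.mem_univ v)

end IsPEDS

theorem dominating_clique_unique_peds_general {D : Set V} (hclique : G.IsClique D)
    (hdom : IsDominating G D) (hcard : 4 ≤ D.encard) : IsPEDS G P ↔ P = G.edgeSet := by
  refine ⟨fun hP => ?_, fun h => h ▸ isPEDS_edgeSet G⟩
  have hDP : D ⊆ endpointSet P := hP.subset_endpointSet_of_isClique hclique hcard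
  refine hP.eq_edgeSet_of_endpointSet_eq_univ (Set.eq_univ_of_forall fun v => ?_)
  obtain hv | ⟨u, hu, huv⟩ := hdom v
  · exact hDP hv
  · exact right_mem_endpointSet
      (hP.mem_of_mem_of_isClique hclique hDP (le_trans (by norm_num) hcard) hu huv)

end

/-- A connected graph with a dominating clique on at least `4` vertices has
exactly one perfect edge dominating set, namely the trivial one `E(G)`. -/
theorem dominating_clique_unique_peds {V : Type*} [Fintype V] (G : SimpleGraph V)
    (hconn : G.Connected) (D : Finset V) (hclique : G.IsClique (D : Set V))
    (hdom : IsDominating G (D : Set V)) (hcard : 4 ≤ D.card) :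
    ∀ P : Set (Sym2 V), IsPEDS G P ↔ P = G.edgeSet := fun _ =>
  dominating_clique_unique_peds_general hclique hdom (by simpa using hcard)
end

section
/- Let G be a connected P5-free finite simple graph that admits a perfect edge dominating set P with P ≠ E(G). Then G has a dominating triangle (a dominating clique on 3 vertices) or a dominating induced P3 (three vertices a, b, c with ab and bc edges, ac a non-edge, forming a dominating set). -/
/-- A graph is `P₅`-free if it contains no induced subgraph isomorphic to the
path on `5` vertices. -/
def P5Free {V : Type*} (G : SimpleGraph V) : Prop :=
  IsEmpty (SimpleGraph.pathGraph 5 ↪g G)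

/-!
Call a vertex white if it is incident with no edge of `P`. White vertices are pairwise
non-adjacent, and a neighbour of a white vertex has exactly one non-white neighbour. Consider the
walks `w u v` with `w` white and `v` not white, and take one whose set of dominated vertices is
maximal; finiteness provides it, and its three vertices form a triangle or an induced `P₃`. If it
were not dominating, connectedness would give an undominated vertex `p` with a dominated neighbour
`q`. If `q` is adjacent to `w`, then `w q r`, with `r` the non-white neighbour of `q`, dominates `p`
and everything `w u v` does, since any loss would create an induced `P₅`. The remaining cases reduce
to this one, or to `q` white and adjacent to `u` with `q u v` as the better walk.
-/

namespace P5Free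

variable {V : Type*} {G : SimpleGraph V}

theorem not_forall_adj_iff (hfree : P5Free G) (f : Fin 5 → V) :
    ¬ ∀ i j, G.Adj (f i) (f j) ↔ (SimpleGraph.pathGraph 5).Adj i j := by
  intro hf
  -- Distinct vertices of the path have distinct neighbourhoods, so `f` is injective.
  have eq_of_twin : ∀ i j : Fin 5, (∀ k, (SimpleGraph.pathGraph 5).Adj i k ↔
      (SimpleGraph.pathGraph 5).Adj j k) → i = j := by
    simp only [SimpleGraph.pathGraph_adj]
    decide
  have hinj : Function.Injective f := fun i j hij ↦
    eq_of_twin i j fun k ↦ by rw [← hf, ← hf, hij]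
  exact hfree.false ⟨⟨f, hinj⟩, hf _ _⟩

theorem exists_chord (hfree : P5Free G) {a b c d e : V}
    (hab : G.Adj a b) (hbc : G.Adj b c) (hcd : G.Adj c d) (hde : G.Adj d e) :
    G.Adj a c ∨ G.Adj a d ∨ G.Adj a e ∨ G.Adj b d ∨ G.Adj b e ∨ G.Adj c e := by
  by_contra! h
  obtain ⟨hac, had, hae, hbd, hbe, hce⟩ := h
  refine hfree.not_forall_adj_iff ![a, b, c, d, e] fun i j ↦ ?_
  rw [SimpleGraph.pathGraph_adj]
  fin_cases i <;> fin_cases j <;> simp [G.adj_comm, *]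

end P5Free

/-- The vertices that are incident with no edge of `P`; when `P` is a perfect edge dominating set
these are its white vertices. -/
def unsaturated {V : Type*} (P : Set (Sym2 V)) : Set V := {v | ∀ e ∈ P, v ∉ e}

/-- The properties of the set `W` of white vertices of a perfect edge dominating set that the
argument uses. The edge set itself is not recorded, as it consists of the edges of `G` with both
endpoints outside `W`. -/
structure IsWhiteSet {V : Type*} (G : SimpleGraph V) (W : Set V) : Prop where
  isIndepSet : G.IsIndepSet W
  existsUnique_adj : ∀ w ∈ W, ∀ u, G.Adj w u → ∃! v, v ∉ W ∧ G.Adj u v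

namespace IsPEDS

variable {V : Type*} {G : SimpleGraph V} {P : Set (Sym2 V)} {x y : V}

theorem mem_of_adj (hP : IsPEDS G P) (hx : x ∉ unsaturated P) (hy : y ∉ unsaturated P)
    (hxy : G.Adj x y) : s(x, y) ∈ P := by
  by_contra hxyP
  obtain ⟨e, heP, hxe⟩ : ∃ e ∈ P, x ∈ e := by simpa [unsaturated] using hx
  obtain ⟨f, hfP, hyf⟩ : ∃ f ∈ P, y ∈ f := by simpa [unsaturated] using hy
  have hef : e = f := (hP.2 s(x, y) hxy hxyP).unique
    ⟨heP, x, hxe, Sym2.mem_mk_left x y⟩ ⟨hfP, y, hyf, Sym2.mem_mk_right x y⟩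
  have he : e = s(x, y) := (Sym2.mem_and_mem_iff hxy.ne).1 ⟨hxe, hef ▸ hyf⟩
  exact hxyP (he ▸ heP)

theorem existsUnique_mem_of_adj (hP : IsPEDS G P) (hx : x ∈ unsaturated P) (hxy : G.Adj x y) :
    ∃! e, e ∈ P ∧ y ∈ e := by
  have hxyP : s(x, y) ∉ P := fun h ↦ hx _ h (Sym2.mem_mk_left x y)
  obtain ⟨e, ⟨heP, v, hve, hv⟩, he⟩ := hP.2 s(x, y) hxy hxyP
  obtain rfl | rfl := Sym2.mem_iff.1 hv
  · exact absurd hve (hx e heP)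
  · exact ⟨e, ⟨heP, hve⟩, fun f hf ↦ he f ⟨hf.1, v, hf.2, hv⟩⟩

theorem isWhiteSet_unsaturated (hP : IsPEDS G P) : IsWhiteSet G (unsaturated P) where
  isIndepSet w hw x hx _ hwx := by
    obtain ⟨e, ⟨heP, hxe⟩, -⟩ := hP.existsUnique_mem_of_adj hw hwx
    exact hx e heP hxe
  existsUnique_adj w hw u hwu := by
    obtain ⟨e, ⟨heP, hue⟩, he⟩ := hP.existsUnique_mem_of_adj hw hwu
    obtain ⟨v, rfl⟩ := hue
    have hu : u ∉ unsaturated P := fun h ↦ h _ heP (Sym2.mem_mk_left u v)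
    refine ⟨v, ⟨fun h ↦ h _ heP (Sym2.mem_mk_right u v), hP.1 heP⟩, fun x hx ↦ ?_⟩
    exact Sym2.congr_right.1 (he s(u, x) ⟨hP.mem_of_adj hu hx.1 hx.2, Sym2.mem_mk_left u x⟩)

theorem exists_unsaturated_adj (hP : IsPEDS G P) (hne : P ≠ G.edgeSet) :
    ∃ w ∈ unsaturated P, ∃ u, G.Adj w u := by
  obtain ⟨f, hf, hfP⟩ := Set.exists_of_ssubset (hP.1.ssubset_of_ne hne)
  induction f with | _ x y
  by_cases hx : x ∈ unsaturated P
  · exact ⟨x, hx, y, hf⟩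
  · have hy : y ∈ unsaturated P := by
      by_contra hy
      exact hfP (hP.mem_of_adj hx hy hf)
    exact ⟨y, hy, x, SimpleGraph.Adj.symm hf⟩

end IsPEDS

/-- A walk `w u v` that starts in the white set `W` and ends outside it; `u` lies outside `W`
automatically. The vertices `w` and `v` may or may not be adjacent. -/
structure IsWhiteWalk {V : Type*} (G : SimpleGraph V) (W : Set V) (w u v : V) : Prop where
  mem : w ∈ W
  notMem : v ∉ W
  adj_left : G.Adj w u
  adj_right : G.Adj u v

/-- The union of the open neighbourhoods of three vertices. For a walk `a b c` this is also the
union of the closed neighbourhoods. -/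
def tripleNbhd {V : Type*} (G : SimpleGraph V) (a b c : V) : Set V :=
  {x | G.Adj a x ∨ G.Adj b x ∨ G.Adj c x}

theorem notMem_tripleNbhd {V : Type*} {G : SimpleGraph V} {a b c x : V} :
    x ∉ tripleNbhd G a b c ↔ ¬ G.Adj a x ∧ ¬ G.Adj b x ∧ ¬ G.Adj c x :=
  not_or.trans (and_congr_right fun _ ↦ not_or)

theorem tripleNbhd_swap {V : Type*} (G : SimpleGraph V) (a b c : V) :
    tripleNbhd G a b c = tripleNbhd G a c b :=
  Set.ext fun _ ↦ or_congr_right or_comm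

theorem isDominating_of_tripleNbhd_eq_univ {V : Type*} {G : SimpleGraph V} {a b c : V}
    (h : tripleNbhd G a b c = Set.univ) : IsDominating G {a, b, c} := by
  intro x
  obtain ha | hb | hc : x ∈ tripleNbhd G a b c := h ▸ Set.mem_univ x
  · exact Or.inr ⟨a, by simp, ha⟩
  · exact Or.inr ⟨b, by simp, hb⟩
  · exact Or.inr ⟨c, by simp, hc⟩

namespace IsWhiteSet

variable {V : Type*} {G : SimpleGraph V} {W : Set V} {w u v p q r x y : V}

theorem not_adj (hW : IsWhiteSet G W) (hw : w ∈ W) (hx : x ∈ W) : ¬ G.Adj w x :=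
  fun hwx ↦ hW.isIndepSet hw hx hwx.ne hwx

theorem notMem_of_adj (hW : IsWhiteSet G W) (hw : w ∈ W) (hwu : G.Adj w u) : u ∉ W :=
  fun hu ↦ hW.not_adj hw hu hwu

theorem eq_of_adj_of_adj (hW : IsWhiteSet G W) (hw : w ∈ W) (hwu : G.Adj w u)
    (hux : G.Adj u x) (hx : x ∉ W) (huy : G.Adj u y) (hy : y ∉ W) : x = y :=
  (hW.existsUnique_adj w hw u hwu).unique ⟨hx, hux⟩ ⟨hy, huy⟩

theorem exists_isWhiteWalk (hW : IsWhiteSet G W) (hw : w ∈ W) (hwu : G.Adj w u) :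
    ∃ v, IsWhiteWalk G W w u v := by
  obtain ⟨v, ⟨hv, huv⟩, -⟩ := hW.existsUnique_adj w hw u hwu
  exact ⟨v, hw, hv, hwu, huv⟩

theorem isWhiteWalk_swap (hW : IsWhiteSet G W) (h : IsWhiteWalk G W w u v) (hwv : G.Adj w v) :
    IsWhiteWalk G W w v u :=
  ⟨h.mem, hW.notMem_of_adj h.mem h.adj_left, hwv, h.adj_right.symm⟩

theorem eq_or_mem_of_adj (hW : IsWhiteSet G W) (h : IsWhiteWalk G W w u v) (hux : G.Adj u x) :
    x = v ∨ x ∈ W := by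
  by_contra! hx
  exact hx.1 (hW.eq_of_adj_of_adj h.mem h.adj_left hux hx.2 h.adj_right h.notMem)

theorem not_adj_of_notMem_tripleNbhd (hW : IsWhiteSet G W) (h : IsWhiteWalk G W w u v)
    (hp : p ∉ tripleNbhd G w u v) (hq : q ∉ W) (hqp : G.Adj q p) : ¬ G.Adj u q := by
  intro huq
  have hqv : q = v := (hW.eq_or_mem_of_adj h huq).resolve_right hq
  exact hp (Or.inr (Or.inr (hqv ▸ hqp)))

theorem adj_or_eq_of_adj_left (hW : IsWhiteSet G W) (hfree : P5Free G)
    (h : IsWhiteWalk G W w u v) (hqr : IsWhiteWalk G W w q r) (hp : p ∉ tripleNbhd G w u v)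
    (hqp : G.Adj q p) : G.Adj w v ∨ r = v := by
  obtain ⟨hwp, hup, hvp⟩ := notMem_tripleNbhd.1 hp
  have hq : q ∉ W := hW.notMem_of_adj h.mem hqr.adj_left
  obtain hpw | hpu | hpv | hqu | hqv | hwv :=
    hfree.exists_chord hqp.symm hqr.adj_left.symm h.adj_left h.adj_right
  · exact absurd hpw.symm hwp
  · exact absurd hpu.symm hup
  · exact absurd hpv.symm hvp
  · exact absurd hqu.symm (hW.not_adj_of_notMem_tripleNbhd h hp hq hqp)
  · exact Or.inr (hW.eq_of_adj_of_adj h.mem hqr.adj_left hqr.adj_right hqr.notMem hqv h.notMem)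
  · exact Or.inl hwv

theorem neighborSet_subset_tripleNbhd (hW : IsWhiteSet G W) (hfree : P5Free G)
    (h : IsWhiteWalk G W w u v) (hqr : IsWhiteWalk G W w q r) (hp : p ∉ tripleNbhd G w u v)
    (hqp : G.Adj q p) : G.neighborSet u ⊆ tripleNbhd G w q r := by
  intro x hux
  obtain rfl | hx := hW.eq_or_mem_of_adj h hux
  · obtain hwx | rfl := hW.adj_or_eq_of_adj_left hfree h hqr hp hqp
    · exact Or.inl hwx
    · exact Or.inr (Or.inl hqr.adj_right)
  · obtain ⟨hwp, hup, -⟩ := notMem_tripleNbhd.1 hp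
    have hq : q ∉ W := hW.notMem_of_adj h.mem hqr.adj_left
    obtain hpw | hpu | hpx | hqu | hqx | hwx :=
      hfree.exists_chord hqp.symm hqr.adj_left.symm h.adj_left hux
    · exact absurd hpw.symm hwp
    · exact absurd hpu.symm hup
    · have hpr : p = r := (hW.eq_or_mem_of_adj hqr hqp).resolve_right
        (hW.notMem_of_adj hx hpx.symm)
      exact Or.inr (Or.inr (hpr ▸ hpx))
    · exact absurd hqu.symm (hW.not_adj_of_notMem_tripleNbhd h hp hq hqp)
    · exact Or.inr (Or.inl hqx)
    · exact absurd hwx (hW.not_adj h.mem hx)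

theorem exists_isWhiteWalk_insert_subset_of_adj_left (hW : IsWhiteSet G W) (hfree : P5Free G)
    (h : IsWhiteWalk G W w u v) (hp : p ∉ tripleNbhd G w u v) (hwq : G.Adj w q)
    (hqp : G.Adj q p) :
    ∃ a b c, IsWhiteWalk G W a b c ∧ insert p (tripleNbhd G w u v) ⊆ tripleNbhd G a b c := by
  obtain ⟨r, hqr⟩ := hW.exists_isWhiteWalk h.mem hwq
  refine ⟨w, q, r, hqr, Set.insert_subset (Or.inr (Or.inl hqp)) ?_⟩
  rintro x (hwx | hux | hvx)
  · exact Or.inl hwx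
  · exact hW.neighborSet_subset_tripleNbhd hfree h hqr hp hqp hux
  · obtain hwv | rfl := hW.adj_or_eq_of_adj_left hfree h hqr hp hqp
    · rw [tripleNbhd_swap] at hp
      exact hW.neighborSet_subset_tripleNbhd hfree (hW.isWhiteWalk_swap h hwv) hqr hp hqp hvx
    · exact Or.inr (Or.inr hvx)

theorem exists_isWhiteWalk_insert_subset_of_adj_middle (hW : IsWhiteSet G W) (hfree : P5Free G)
    (h : IsWhiteWalk G W w u v) (hp : p ∉ tripleNbhd G w u v) (hq : q ∈ W) (huq : G.Adj u q)
    (hqp : G.Adj q p) :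
    ∃ a b c, IsWhiteWalk G W a b c ∧ insert p (tripleNbhd G w u v) ⊆ tripleNbhd G a b c := by
  by_cases hsub : G.neighborSet w ⊆ tripleNbhd G q u v
  · refine ⟨q, u, v, ⟨hq, h.notMem, huq.symm, h.adj_right⟩, Set.insert_subset (Or.inl hqp) ?_⟩
    rintro x (hwx | hx)
    · exact hsub hwx
    · exact Or.inr hx
  · obtain ⟨x, hwx, hx⟩ := Set.not_subset.1 hsub
    obtain ⟨hwp, hup, -⟩ := notMem_tripleNbhd.1 hp
    obtain ⟨hqx, hux, -⟩ := notMem_tripleNbhd.1 hx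
    have hxp : G.Adj x p := by
      obtain hxu | hxq | hxp | hwq | hwp' | hup' :=
        hfree.exists_chord (G.adj_symm hwx) h.adj_left huq hqp
      · exact absurd hxu.symm hux
      · exact absurd hxq.symm hqx
      · exact hxp
      · exact absurd hwq (hW.not_adj h.mem hq)
      · exact absurd hwp' hwp
      · exact absurd hup' hup
    exact hW.exists_isWhiteWalk_insert_subset_of_adj_left hfree h hp hwx hxp

theorem adj_and_mem_of_adj_right (hW : IsWhiteSet G W) (hfree : P5Free G)
    (h : IsWhiteWalk G W w u v) (hp : p ∉ tripleNbhd G w u v) (hwq : ¬ G.Adj w q)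
    (huq : ¬ G.Adj u q) (hvq : G.Adj v q) (hqp : G.Adj q p) : G.Adj w v ∧ q ∈ W := by
  obtain ⟨hwp, hup, hvp⟩ := notMem_tripleNbhd.1 hp
  have hwv : G.Adj w v := by
    obtain hwv | hwq' | hwp' | huq' | hup' | hvp' :=
      hfree.exists_chord h.adj_left h.adj_right hvq hqp
    · exact hwv
    · exact absurd hwq' hwq
    · exact absurd hwp' hwp
    · exact absurd huq' huq
    · exact absurd hup' hup
    · exact absurd hvp' hvp
  have hqu : q ≠ u := by
    rintro rfl
    exact hwq h.adj_left
  exact ⟨hwv, (hW.eq_or_mem_of_adj (hW.isWhiteWalk_swap h hwv) hvq).resolve_left hqu⟩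

theorem exists_isWhiteWalk_insert_subset (hW : IsWhiteSet G W) (hfree : P5Free G)
    (h : IsWhiteWalk G W w u v) (hp : p ∉ tripleNbhd G w u v) (hq : q ∈ tripleNbhd G w u v)
    (hqp : G.Adj q p) :
    ∃ a b c, IsWhiteWalk G W a b c ∧ insert p (tripleNbhd G w u v) ⊆ tripleNbhd G a b c := by
  by_cases hwq : G.Adj w q
  · exact hW.exists_isWhiteWalk_insert_subset_of_adj_left hfree h hp hwq hqp
  by_cases huq : G.Adj u q
  · have hqW : q ∈ W := by
      by_contra hqW
      exact hW.not_adj_of_notMem_tripleNbhd h hp hqW hqp huq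
    exact hW.exists_isWhiteWalk_insert_subset_of_adj_middle hfree h hp hqW huq hqp
  · have hvq : G.Adj v q := (hq.resolve_left hwq).resolve_left huq
    obtain ⟨hwv, hqW⟩ := hW.adj_and_mem_of_adj_right hfree h hp hwq huq hvq hqp
    rw [tripleNbhd_swap] at hp ⊢
    exact hW.exists_isWhiteWalk_insert_subset_of_adj_middle hfree (hW.isWhiteWalk_swap h hwv) hp
      hqW hvq hqp

theorem exists_isWhiteWalk_isDominating [Finite V] (hW : IsWhiteSet G W) (hconn : G.Connected)
    (hfree : P5Free G) (hw : w ∈ W) (hwu : G.Adj w u) :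
    ∃ a b c, IsWhiteWalk G W a b c ∧ IsDominating G {a, b, c} := by
  let nbhds : Set (Set V) := {S | ∃ a b c, IsWhiteWalk G W a b c ∧ tripleNbhd G a b c = S}
  have hne : nbhds.Nonempty := by
    obtain ⟨v, hv⟩ := hW.exists_isWhiteWalk hw hwu
    exact ⟨_, w, u, v, hv, rfl⟩
  obtain ⟨_, ⟨a, b, c, habc, rfl⟩, hmax⟩ := nbhds.toFinite.exists_maximal hne
  refine ⟨a, b, c, habc, isDominating_of_tripleNbhd_eq_univ (Set.eq_univ_of_forall fun x ↦ ?_)⟩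
  by_contra hx
  obtain ⟨walk⟩ := hconn.preconnected b x
  obtain ⟨⟨⟨q, p⟩, hqp⟩, -, hq, hp⟩ :=
    walk.exists_boundary_dart (tripleNbhd G a b c) (Or.inl habc.adj_left) hx
  obtain ⟨a', b', c', habc', hsub⟩ := hW.exists_isWhiteWalk_insert_subset hfree habc hp hq hqp
  rw [Set.insert_subset_iff] at hsub
  exact hp (hmax ⟨a', b', c', habc', rfl⟩ hsub.2 hsub.1)

end IsWhiteSet

/-- A connected `P₅`-free graph with a non-trivial perfect edge dominating set
has a dominating triangle or a dominating induced `P₃`. -/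
theorem nontrivial_peds_dominating {V : Type*} [Fintype V] (G : SimpleGraph V)
    (hconn : G.Connected) (hfree : P5Free G) (P : Set (Sym2 V))
    (hP : IsPEDS G P) (hne : P ≠ G.edgeSet) :
    (∃ a b c : V, G.Adj a b ∧ G.Adj a c ∧ G.Adj b c ∧
      IsDominating G {a, b, c}) ∨
    (∃ a b c : V, G.Adj a b ∧ G.Adj b c ∧ ¬ G.Adj a c ∧ a ≠ c ∧
      IsDominating G {a, b, c}) := by
  obtain ⟨w, hw, u, hwu⟩ := hP.exists_unsaturated_adj hne
  obtain ⟨a, b, c, habc, hdom⟩ :=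
    hP.isWhiteSet_unsaturated.exists_isWhiteWalk_isDominating hconn hfree hw hwu
  by_cases hac : G.Adj a c
  · exact Or.inl ⟨a, b, c, habc.adj_left, hac, habc.adj_right, hdom⟩
  · have hne' : a ≠ c := ne_of_mem_of_not_mem habc.mem habc.notMem
    exact Or.inr ⟨a, b, c, habc.adj_left, habc.adj_right, hac, hne', hdom⟩
end
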